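/- arXiv:math/0406114 — 2 statements merged into one kernel-verified Lean document; each statement's English description precedes it below -/
import Mathlib

section
/- Finiteness of the Hausdorff measure: Let (Λ,f) be a strongly mixing C¹ conformal repeller with scale constants δ_f, λ₀, λ₁ as in (C2') and (C3') and distortion modulus ε, and let s_crit be the unique zero of the pressure. If ∫₀^{λ₀δ_f} ε(t)/t dt < ∞, then the s_crit-dimensional Hausdorff measure of Λ is finite and positive: 0 < H^{s_crit}(Λ) < ∞. -/
open Filter Topology Metric Set MeasureTheory
open scoped Classical ENNReal

noncomputable section

/-- `Df` is the conformal derivative of `f`. -/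
def IsConfDeriv {Λ : Type*} [MetricSpace Λ] (f : Λ → Λ) (Df : Λ → ℝ) : Prop :=
  ∀ x : Λ, Filter.Tendsto (fun p : Λ × Λ => dist (f p.1) (f p.2) / dist p.1 p.2)
    ((𝓝 x ×ˢ 𝓝 x) ⊓ 𝓟 {p : Λ × Λ | p.1 ≠ p.2}) (𝓝 (Df x))

/-- `Df^{(n)}_x`, the conformal derivative along the orbit. -/
def orbDeriv {Λ : Type*} [MetricSpace Λ] (f : Λ → Λ) (Df : Λ → ℝ) (n : ℕ) (x : Λ) : ℝ :=
  ∏ k ∈ Finset.range n, Df (f^[k] x)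

/-- (C2): uniform expansion. -/
def UnifExpanding {Λ : Type*} [MetricSpace Λ] (f : Λ → Λ) (Df : Λ → ℝ) : Prop :=
  ∃ C : ℝ, 0 < C ∧ ∃ β : ℝ, 1 < β ∧ ∀ (x : Λ) (n : ℕ), C * β ^ n ≤ orbDeriv f Df n x

/-- divided difference `f[u,v]`, equal to `Df u` on the diagonal. -/
def divDiff {Λ : Type*} [MetricSpace Λ] (f : Λ → Λ) (Df : Λ → ℝ) (u v : Λ) : ℝ :=
  if u = v then Df u else dist (f u) (f v) / dist u v

/-- the distortion modulus `ε(r)`. -/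
def distMod {Λ : Type*} [MetricSpace Λ] (f : Λ → Λ) (Df : Λ → ℝ) (δf r : ℝ) : ℝ :=
  sSup {t : ℝ | ∃ x u₁ u₂ u₃ u₄ : Λ,
    u₁ ∈ ball x δf ∩ f ⁻¹' ball (f x) r ∧
    u₂ ∈ ball x δf ∩ f ⁻¹' ball (f x) r ∧
    u₃ ∈ ball x δf ∩ f ⁻¹' ball (f x) r ∧
    u₄ ∈ ball x δf ∩ f ⁻¹' ball (f x) r ∧
    t = |Real.log (divDiff f Df u₁ u₂ / divDiff f Df u₃ u₄)|}

/-- `M_n(s) = sup_y (L_sⁿ 1)(y)`. -/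
def Mn {Λ : Type*} [MetricSpace Λ] (f : Λ → Λ) (Df : Λ → ℝ) (s : ℝ) (n : ℕ) : ℝ :=
  ⨆ y : Λ, ∑' x : ↥(f^[n] ⁻¹' {y}), orbDeriv f Df n (x : Λ) ^ (-s)

/-- `m_n(s) = inf_y (L_sⁿ 1)(y)`. -/
def mn {Λ : Type*} [MetricSpace Λ] (f : Λ → Λ) (Df : Λ → ℝ) (s : ℝ) (n : ℕ) : ℝ :=
  ⨅ y : Λ, ∑' x : ↥(f^[n] ⁻¹' {y}), orbDeriv f Df n (x : Λ) ^ (-s)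

/-- bundled expansion data -/
structure CRep {Λ : Type*} [MetricSpace Λ] (f : Λ → Λ) (Df : Λ → ℝ) (δ a b : ℝ) : Prop where
  ha : 1 < a
  hδ : 0 < δ
  lo : ∀ u v : Λ, dist u v < δ → a * dist u v ≤ dist (f u) (f v)
  hi : ∀ u v : Λ, dist u v < δ → dist (f u) (f v) ≤ b * dist u v
  Dlo : ∀ x : Λ, a ≤ Df x
  Dhi : ∀ x : Λ, Df x ≤ b
  pull : ∀ x : Λ, ball (f x) δ ⊆ f '' ball x δ

/-- shadowing relation -/
def Sh {Λ : Type*} [MetricSpace Λ] (f : Λ → Λ) (δ : ℝ) (n : ℕ) (x u : Λ) : Prop :=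
  (∀ k < n, dist (f^[k] u) (f^[k] x) < δ) ∧ dist (f^[n] u) (f^[n] x) < δ / 2

/-- scales -/
def scl (δ a : ℝ) (k : ℕ) : ℝ := δ / 2 * (a⁻¹) ^ k

theorem CRep.of {Λ : Type*} [MetricSpace Λ]
    (hpt : ∀ x : Λ, (𝓝[≠] x).NeBot)
    (f : Λ → Λ) (Df : Λ → ℝ)
    (hconf : IsConfDeriv f Df)
    (β lam₀ lam₁ δf : ℝ)
    (hDfβ : ∀ x : Λ, β ≤ Df x)
    (hlam₀ : 1 < lam₀) (hlam₀β : lam₀ < β) (hδf : 0 < δf)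
    (hC2' : ∀ u v : Λ, u ≠ v → dist u v < δf →
      lam₀ ≤ dist (f u) (f v) / dist u v ∧ dist (f u) (f v) / dist u v ≤ lam₁)
    (hC3' : ∀ x : Λ, ball (f x) δf ⊆ f '' ball x δf) : CRep f Df δf lam₀ lam₁ where
  ha := hlam₀
  hδ := hδf
  lo := by
    intro u v h
    by_cases huv : u = v
    · subst huv; simp
    · have := (hC2' u v huv h).1
      rwa [le_div_iff₀ (dist_pos.2 huv)] at this
  hi := by
    intro u v h
    by_cases huv : u = v
    · subst huv; simp
    · have := (hC2' u v huv h).2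
      rwa [div_le_iff₀ (dist_pos.2 huv)] at this
  Dlo := fun x => hlam₀β.le.trans (hDfβ x)
  Dhi := by
    intro x
    have hne := hpt x
    have ht : Tendsto (fun v : Λ => (v, x)) (𝓝[≠] x)
        ((𝓝 x ×ˢ 𝓝 x) ⊓ 𝓟 {p : Λ × Λ | p.1 ≠ p.2}) := by
      refine tendsto_inf.2 ⟨?_, ?_⟩
      · exact (tendsto_id.mono_left nhdsWithin_le_nhds).prodMk tendsto_const_nhds
      · refine tendsto_principal.2 ?_
        filter_upwards [self_mem_nhdsWithin] with v hv using hv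
    refine le_of_tendsto ((hconf x).comp ht) ?_
    have h1 : ∀ᶠ v in 𝓝[≠] x, dist v x < δf :=
      nhdsWithin_le_nhds (Metric.ball_mem_nhds x hδf)
    filter_upwards [h1, self_mem_nhdsWithin] with v hv hv'
    exact (hC2' v x hv' hv).2
  pull := hC3'

section
variable {Λ : Type*} [MetricSpace Λ] {f : Λ → Λ} {Df : Λ → ℝ} {δ a b : ℝ}

theorem CRep.divDiff_mem (R : CRep f Df δ a b) {u v : Λ} (h : dist u v < δ) :
    a ≤ divDiff f Df u v ∧ divDiff f Df u v ≤ b := by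
  unfold divDiff
  split_ifs with huv
  · exact ⟨R.Dlo u, R.Dhi u⟩
  · rw [le_div_iff₀ (dist_pos.2 huv), div_le_iff₀ (dist_pos.2 huv)]
    exact ⟨R.lo u v h, R.hi u v h⟩

theorem CRep.near (R : CRep f Df δ a b) {x u v : Λ} {r : ℝ} (hr : r ≤ δ / 2)
    (hu : u ∈ ball x δ ∩ f ⁻¹' ball (f x) r) (hv : v ∈ ball x δ ∩ f ⁻¹' ball (f x) r) :
    dist u v < δ := by
  have key : ∀ w, w ∈ ball x δ ∩ f ⁻¹' ball (f x) r → dist w x < δ / 2 := by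
    rintro w ⟨h1, h2⟩
    have h3 := R.lo w x h1
    have h2' : dist (f w) (f x) < r := h2
    have := R.ha
    have : 0 ≤ dist w x := dist_nonneg
    nlinarith
  have := dist_triangle_right u v x
  linarith [key u hu, key v hv]

theorem CRep.elem_bound (R : CRep f Df δ a b) {u v w z : Λ} (h : dist u v < δ) (h' : dist w z < δ) :
    |Real.log (divDiff f Df u v / divDiff f Df w z)| ≤ Real.log b - Real.log a := by
  obtain ⟨h1, h2⟩ := R.divDiff_mem h
  obtain ⟨h3, h4⟩ := R.divDiff_mem h'
  have ha := R.ha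
  rw [Real.log_div (by linarith) (by linarith), abs_le]
  have := Real.log_le_log (by linarith) h1
  have := Real.log_le_log (by linarith) h2
  have := Real.log_le_log (by linarith) h3
  have := Real.log_le_log (by linarith) h4
  constructor <;> linarith

theorem CRep.bdd (R : CRep f Df δ a b) {r : ℝ} (hr : r ≤ δ / 2) :
    BddAbove {t : ℝ | ∃ x u₁ u₂ u₃ u₄ : Λ,
    u₁ ∈ ball x δ ∩ f ⁻¹' ball (f x) r ∧
    u₂ ∈ ball x δ ∩ f ⁻¹' ball (f x) r ∧
    u₃ ∈ ball x δ ∩ f ⁻¹' ball (f x) r ∧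
    u₄ ∈ ball x δ ∩ f ⁻¹' ball (f x) r ∧
    t = |Real.log (divDiff f Df u₁ u₂ / divDiff f Df u₃ u₄)|} := by
  refine ⟨Real.log b - Real.log a, ?_⟩
  rintro t ⟨x, u₁, u₂, u₃, u₄, h1, h2, h3, h4, rfl⟩
  exact R.elem_bound (R.near hr h1 h2) (R.near hr h3 h4)

theorem distMod_nonneg (r : ℝ) : 0 ≤ distMod f Df δ r := by
  refine Real.sSup_nonneg ?_
  rintro t ⟨x, u₁, u₂, u₃, u₄, h1, h2, h3, h4, rfl⟩
  exact abs_nonneg _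

theorem CRep.distMod_mono [Nonempty Λ] (R : CRep f Df δ a b) {r r' : ℝ} (hr0 : 0 < r) (h : r ≤ r')
    (hr : r' ≤ δ / 2) : distMod f Df δ r ≤ distMod f Df δ r' := by
  refine csSup_le_csSup (R.bdd hr) ?_ ?_
  · obtain ⟨x⟩ := ‹Nonempty Λ›
    have hx : x ∈ ball x δ ∩ f ⁻¹' ball (f x) r := ⟨mem_ball_self R.hδ, mem_ball_self hr0⟩
    exact ⟨_, x, x, x, x, x, hx, hx, hx, hx, rfl⟩
  · have hs : ∀ x : Λ, ball x δ ∩ f ⁻¹' ball (f x) r ⊆ ball x δ ∩ f ⁻¹' ball (f x) r' :=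
      fun x => inter_subset_inter_right _ (preimage_mono (ball_subset_ball h))
    rintro t ⟨x, u₁, u₂, u₃, u₄, h1, h2, h3, h4, rfl⟩
    exact ⟨x, u₁, u₂, u₃, u₄, hs x h1, hs x h2, hs x h3, hs x h4, rfl⟩

theorem CRep.step (R : CRep f Df δ a b) {x u v : Λ} {r : ℝ} (hr0 : 0 < r) (hr : r ≤ δ / 2)
    (hu : u ∈ ball x δ ∩ f ⁻¹' ball (f x) r) (hv : v ∈ ball x δ ∩ f ⁻¹' ball (f x) r) :
    divDiff f Df u v ≤ Real.exp (distMod f Df δ r) * Df x ∧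
    Df x ≤ Real.exp (distMod f Df δ r) * divDiff f Df u v := by
  have hx : x ∈ ball x δ ∩ f ⁻¹' ball (f x) r := ⟨mem_ball_self R.hδ, mem_ball_self hr0⟩
  have h := le_csSup (R.bdd hr) ⟨x, u, v, x, x, hu, hv, hx, hx, rfl⟩
  change _ ≤ distMod f Df δ r at h
  have hd : divDiff f Df x x = Df x := by simp [divDiff]
  have h1 := (R.divDiff_mem (R.near hr hu hv)).1
  have h2 := R.Dlo x
  have ha := R.ha
  have p1 : 0 < divDiff f Df u v := by linarith
  have p2 : 0 < Df x := by linarith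
  rw [hd, Real.log_div p1.ne' p2.ne', abs_le] at h
  constructor
  · calc _ = Real.exp (Real.log (divDiff f Df u v)) := (Real.exp_log p1).symm
      _ ≤ Real.exp (distMod f Df δ r + Real.log (Df x)) := Real.exp_le_exp.2 (by linarith)
      _ = _ := by rw [Real.exp_add, Real.exp_log p2]
  · calc _ = Real.exp (Real.log (Df x)) := (Real.exp_log p2).symm
      _ ≤ Real.exp (distMod f Df δ r + Real.log (divDiff f Df u v)) :=
        Real.exp_le_exp.2 (by linarith)
      _ = _ := by rw [Real.exp_add, Real.exp_log p1]

theorem CRep.step' (R : CRep f Df δ a b) {x u v : Λ} {r : ℝ} (hr0 : 0 < r) (hr : r ≤ δ / 2)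
    (hu : u ∈ ball x δ ∩ f ⁻¹' ball (f x) r) (hv : v ∈ ball x δ ∩ f ⁻¹' ball (f x) r) :
    dist (f u) (f v) ≤ Real.exp (distMod f Df δ r) * Df x * dist u v ∧
    Df x * dist u v ≤ Real.exp (distMod f Df δ r) * dist (f u) (f v) := by
  obtain ⟨h1, h2⟩ := R.step hr0 hr hu hv
  have hd : dist (f u) (f v) = divDiff f Df u v * dist u v := by
    unfold divDiff
    split_ifs with huv
    · subst huv; simp
    · rw [div_mul_cancel₀ _ (dist_pos.2 huv).ne']
  rw [hd, ← mul_assoc]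
  exact ⟨by gcongr, by gcongr⟩

theorem scl_pos (R : CRep f Df δ a b) (k : ℕ) : 0 < scl δ a k := by
  have := R.ha; have := R.hδ; unfold scl; positivity

theorem scl_succ (k : ℕ) (ha : 1 < a) : scl δ a k = a * scl δ a (k + 1) := by
  unfold scl; rw [pow_succ]; field_simp

theorem scl_le (R : CRep f Df δ a b) (k : ℕ) : scl δ a k ≤ δ / 2 := by
  have := R.ha; have := R.hδ; unfold scl
  have : (a⁻¹) ^ k ≤ 1 := pow_le_one₀ (by positivity) (inv_le_one_of_one_le₀ (by linarith))
  nlinarith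

theorem Sh.cons {n : ℕ} {x u : Λ} (h : Sh f δ (n + 1) x u) : dist u x < δ ∧ Sh f δ n (f x) (f u) := by
  refine ⟨h.1 0 (by omega), fun k hk => ?_, h.2⟩
  exact h.1 (k + 1) (by omega)

theorem Sh.of_cons {n : ℕ} {x u : Λ} (h0 : dist u x < δ) (h : Sh f δ n (f x) (f u)) :
    Sh f δ (n + 1) x u := by
  refine ⟨fun k hk => ?_, h.2⟩
  cases k with
  | zero => exact h0
  | succ k => exact h.1 k (by omega)

theorem Sh.symm {n : ℕ} {x u : Λ} (h : Sh f δ n x u) : Sh f δ n u x :=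
  ⟨fun k hk => by rw [dist_comm]; exact h.1 k hk, by rw [dist_comm]; exact h.2⟩

theorem Sh.dist_lt (R : CRep f Df δ a b) {n : ℕ} : ∀ {x u : Λ}, Sh f δ n x u →
    dist u x < scl δ a n := by
  induction n with
  | zero => intro x u h; simpa [scl] using h.2
  | succ n ih =>
    intro x u h
    have h1 := ih h.cons.2
    have h2 := R.lo u x h.cons.1
    have := R.ha
    rw [scl_succ n R.ha] at h1
    exact lt_of_mul_lt_mul_left (h2.trans_lt h1) (by linarith)

theorem orb_succ (n : ℕ) (x : Λ) : orbDeriv f Df (n + 1) x = Df x * orbDeriv f Df n (f x) := by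
  unfold orbDeriv
  rw [Finset.prod_range_succ', mul_comm]; rfl

theorem orb_add (m n : ℕ) (x : Λ) :
    orbDeriv f Df (m + n) x = orbDeriv f Df m x * orbDeriv f Df n (f^[m] x) := by
  unfold orbDeriv
  rw [Finset.prod_range_add]
  congr 1
  refine Finset.prod_congr rfl fun k _ => ?_
  rw [← Function.iterate_add_apply, add_comm]

theorem CRep.orb_ge (R : CRep f Df δ a b) (n : ℕ) (x : Λ) : a ^ n ≤ orbDeriv f Df n x := by
  unfold orbDeriv
  have := R.ha
  have := Finset.prod_le_prod (s := Finset.range n) (f := fun _ => a)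
    (g := fun k => Df (f^[k] x)) (fun _ _ => by linarith) (fun k _ => R.Dlo _)
  simpa using this

theorem CRep.orb_pos (R : CRep f Df δ a b) (n : ℕ) (x : Λ) : 0 < orbDeriv f Df n x :=
  lt_of_lt_of_le (pow_pos (by linarith [R.ha]) n) (R.orb_ge n x)

theorem CRep.orb_one (R : CRep f Df δ a b) (n : ℕ) (x : Λ) : 1 ≤ orbDeriv f Df n x :=
  (one_le_pow₀ R.ha.le).trans (R.orb_ge n x)

theorem CRep.orb_le (R : CRep f Df δ a b) (n : ℕ) (x : Λ) : orbDeriv f Df n x ≤ b ^ n := by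
  unfold orbDeriv
  have := R.ha
  have := Finset.prod_le_prod (s := Finset.range n) (f := fun k => Df (f^[k] x))
    (g := fun k => b) (fun k _ => by linarith [R.Dlo (f^[k] x)]) (fun k _ => R.Dhi _)
  simpa using this

theorem Sh.mem (R : CRep f Df δ a b) {n : ℕ} {x u : Λ} (h : Sh f δ (n + 1) x u) :
    u ∈ ball x δ ∩ f ⁻¹' ball (f x) (scl δ a n) :=
  ⟨h.cons.1, Sh.dist_lt R h.cons.2⟩

theorem Sh.distort (R : CRep f Df δ a b) {n : ℕ} : ∀ {x u v : Λ}, Sh f δ n x u → Sh f δ n x v →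
    dist (f^[n] u) (f^[n] v) ≤ Real.exp (∑ k ∈ Finset.range n, distMod f Df δ (scl δ a k)) *
      orbDeriv f Df n x * dist u v ∧
    orbDeriv f Df n x * dist u v ≤
      Real.exp (∑ k ∈ Finset.range n, distMod f Df δ (scl δ a k)) * dist (f^[n] u) (f^[n] v) := by
  induction n with
  | zero => intro x u v _ _; simp [orbDeriv]
  | succ n ih =>
    intro x u v hu hv
    obtain ⟨h1, h2⟩ := ih hu.cons.2 hv.cons.2
    obtain ⟨h3, h4⟩ := R.step' (scl_pos R n) (scl_le R n) (hu.mem R) (hv.mem R)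
    rw [Finset.sum_range_succ, Real.exp_add, orb_succ, Function.iterate_succ_apply,
      Function.iterate_succ_apply]
    set E := Real.exp (∑ k ∈ Finset.range n, distMod f Df δ (scl δ a k))
    have hE : 0 < E := Real.exp_pos _
    have ho := R.orb_pos n (f x)
    constructor
    · calc _ ≤ _ := h1
        _ ≤ E * orbDeriv f Df n (f x) * (Real.exp (distMod f Df δ (scl δ a n)) * Df x * dist u v) := by
          gcongr
        _ = _ := by ring
    · calc _ = orbDeriv f Df n (f x) * (Df x * dist u v) := by ring
        _ ≤ orbDeriv f Df n (f x) * (Real.exp (distMod f Df δ (scl δ a n)) * dist (f u) (f v)) := by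
          gcongr
        _ = Real.exp (distMod f Df δ (scl δ a n)) * (orbDeriv f Df n (f x) * dist (f u) (f v)) := by
          ring
        _ ≤ Real.exp (distMod f Df δ (scl δ a n)) * (E * dist (f^[n] (f u)) (f^[n] (f v))) := by
          gcongr
        _ = _ := by ring

theorem Sh.orb (R : CRep f Df δ a b) {n : ℕ} : ∀ {x u : Λ}, Sh f δ n x u →
    orbDeriv f Df n x ≤ Real.exp (∑ k ∈ Finset.range n, distMod f Df δ (scl δ a k)) *
      orbDeriv f Df n u := by
  induction n with
  | zero => intro x u _; simp [orbDeriv]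
  | succ n ih =>
    intro x u hu
    have h1 := ih hu.cons.2
    have h2 := (R.step (scl_pos R n) (scl_le R n) (hu.mem R) (hu.mem R)).2
    have hd : divDiff f Df u u = Df u := by simp [divDiff]
    rw [hd] at h2
    rw [Finset.sum_range_succ, Real.exp_add, orb_succ, orb_succ]
    have := R.Dlo x
    have := R.ha
    have := R.Dlo u
    have ho := R.orb_pos n (f x)
    calc _ ≤ _ := mul_le_mul h2 h1 ho.le (by have := Real.exp_pos (distMod f Df δ (scl δ a n)); nlinarith)
      _ = _ := by ring

theorem CRep.exists_sh (R : CRep f Df δ a b) (n : ℕ) : ∀ (x y : Λ), dist y (f^[n] x) < δ / 2 →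
    ∃ u, f^[n] u = y ∧ Sh f δ n x u := by
  induction n with
  | zero => intro x y h; exact ⟨y, rfl, by simp, h⟩
  | succ n ih =>
    intro x y h
    obtain ⟨z, hz, hs⟩ := ih (f x) y h
    have h1 := Sh.dist_lt R hs
    have h2 := scl_le R n
    have h3 := R.hδ
    obtain ⟨u, hu, rfl⟩ := R.pull x (show z ∈ ball (f x) δ from by rw [mem_ball]; linarith)
    exact ⟨u, hz, Sh.of_cons hu hs⟩

theorem Sh.inj (R : CRep f Df δ a b) {n : ℕ} {x u v : Λ} (hu : Sh f δ n x u) (hv : Sh f δ n x v)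
    (h : f^[n] u = f^[n] v) : u = v := by
  have h1 := (hu.distort R hv).2
  rw [h, dist_self, mul_zero] at h1
  have := R.orb_pos n x
  rw [← dist_le_zero]
  by_contra hc
  push Not at hc
  have := mul_pos this hc
  linarith

theorem CRep.dini [Nonempty Λ] (R : CRep f Df δ a b)
    (hd : IntegrableOn (fun t : ℝ => distMod f Df δ t / t) (Set.Ioc 0 (a * δ))) :
    ∃ A : ℝ, 0 ≤ A ∧ ∀ n, ∑ k ∈ Finset.range n, distMod f Df δ (scl δ a k) ≤ A := by
  set g : ℝ → ℝ := fun t => distMod f Df δ t / t with hg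
  have ha := R.ha
  have hδ := R.hδ
  have hsub : ∀ k, Ioc (scl δ a k) (scl δ a 0) ⊆ Ioc 0 (a * δ) := by
    intro k t ht
    have := scl_pos R k
    have := scl_le R 0
    exact ⟨by linarith [ht.1], by nlinarith [ht.2]⟩
  have hc : 0 < 1 - a⁻¹ := by
    have := inv_lt_one_of_one_lt₀ ha
    linarith
  have hanti : ∀ k, scl δ a (k + 1) ≤ scl δ a k := by
    intro k
    have := scl_pos R (k + 1)
    rw [scl_succ k ha]; nlinarith
  have hle0 : ∀ k, scl δ a k ≤ scl δ a 0 := by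
    intro k
    have := scl_le R k
    simpa [scl] using this
  have piece : ∀ k, (1 - a⁻¹) * distMod f Df δ (scl δ a (k + 1)) ≤
      ∫ t in Ioc (scl δ a (k + 1)) (scl δ a k), g t := by
    intro k
    have hp := scl_pos R (k + 1)
    have hp' := scl_pos R k
    have hI : IntegrableOn g (Ioc (scl δ a (k + 1)) (scl δ a k)) :=
      hd.mono_set ((Ioc_subset_Ioc_right (hle0 k)).trans (hsub (k + 1)))
    have h1 : ∫ t in Ioc (scl δ a (k + 1)) (scl δ a k),
        distMod f Df δ (scl δ a (k + 1)) / scl δ a k ≤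
        ∫ t in Ioc (scl δ a (k + 1)) (scl δ a k), g t := by
      refine setIntegral_mono_on (by simp [integrableOn_const_iff]) hI measurableSet_Ioc ?_
      intro t ht
      have ht0 : 0 < t := hp.trans ht.1
      exact div_le_div₀ (distMod_nonneg t)
        (R.distMod_mono hp ht.1.le (ht.2.trans (scl_le R k))) ht0 ht.2
    refine le_trans (le_of_eq ?_) h1
    rw [setIntegral_const, smul_eq_mul, Measure.real, Real.volume_Ioc,
      ENNReal.toReal_ofReal (by linarith [hanti k])]
    rw [scl_succ k ha]
    field_simp
  have tot : ∀ n, (1 - a⁻¹) * ∑ k ∈ Finset.range n, distMod f Df δ (scl δ a (k + 1)) ≤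
      ∫ t in Ioc (scl δ a n) (scl δ a 0), g t := by
    intro n
    induction n with
    | zero => simp
    | succ n ih =>
      rw [← Ioc_union_Ioc_eq_Ioc (hanti n) (hle0 n), setIntegral_union (by
        rw [Set.disjoint_left]; intro t h1 h2; exact absurd h1.2 (not_le.2 h2.1)) measurableSet_Ioc
        (hd.mono_set ((Ioc_subset_Ioc_right (hle0 n)).trans (hsub (n + 1))))
        (hd.mono_set (hsub n)), Finset.sum_range_succ, mul_add]
      linarith [piece n]
  have tot2 : ∀ n, ∫ t in Ioc (scl δ a n) (scl δ a 0), g t ≤ ∫ t in Ioc 0 (a * δ), g t := by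
    intro n
    refine setIntegral_mono_set hd ?_ (hsub n).eventuallyLE
    filter_upwards [ae_restrict_mem measurableSet_Ioc] with t ht
    exact div_nonneg (distMod_nonneg t) ht.1.le
  set I := ∫ t in Ioc 0 (a * δ), g t
  have hI0 : 0 ≤ I := by
    have := (tot 0).trans (tot2 0)
    simpa using this
  refine ⟨I / (1 - a⁻¹) + distMod f Df δ (scl δ a 0),
    add_nonneg (div_nonneg hI0 hc.le) (distMod_nonneg _), fun n => ?_⟩
  have h1 : ∑ k ∈ Finset.range n, distMod f Df δ (scl δ a k) ≤
      ∑ k ∈ Finset.range (n + 1), distMod f Df δ (scl δ a k) := by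
    rw [Finset.sum_range_succ]
    linarith [distMod_nonneg (f := f) (Df := Df) (δ := δ) (scl δ a n)]
  refine h1.trans ?_
  rw [Finset.sum_range_succ']
  gcongr
  rw [le_div_iff₀ hc, mul_comm]
  exact (tot n).trans (tot2 n)

end

/-- weights -/
def WW {Λ : Type*} [MetricSpace Λ] (f : Λ → Λ) (Df : Λ → ℝ) (s : ℝ) (n : ℕ) (x : Λ) : ℝ≥0∞ :=
  ENNReal.ofReal (orbDeriv f Df n x ^ (-s))

/-- transfer operator iterates of 1 -/
def EE {Λ : Type*} [MetricSpace Λ] (f : Λ → Λ) (Df : Λ → ℝ) (s : ℝ) (n : ℕ) (y : Λ) : ℝ≥0∞ :=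
  ∑' x : Λ, if f^[n] x = y then WW f Df s n x else 0

section
variable {Λ : Type*} [MetricSpace Λ] {f : Λ → Λ} {Df : Λ → ℝ} {δ a b s : ℝ}

theorem CRep.W_add (R : CRep f Df δ a b) (m n : ℕ) (x : Λ) :
    WW f Df s (m + n) x = WW f Df s m x * WW f Df s n (f^[m] x) := by
  unfold WW
  rw [orb_add, Real.mul_rpow (R.orb_pos _ _).le (R.orb_pos _ _).le, ENNReal.ofReal_mul]
  exact Real.rpow_nonneg (R.orb_pos _ _).le _

theorem CRep.W_le_one (R : CRep f Df δ a b) (hs : 0 ≤ s) (n : ℕ) (x : Λ) :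
    WW f Df s n x ≤ 1 := by
  unfold WW
  rw [ENNReal.ofReal_le_one]
  exact Real.rpow_le_one_of_one_le_of_nonpos (R.orb_one n x) (by linarith)

theorem CRep.W_pos (R : CRep f Df δ a b) (n : ℕ) (x : Λ) : 0 < WW f Df s n x := by
  unfold WW
  rw [ENNReal.ofReal_pos]
  exact Real.rpow_pos_of_pos (R.orb_pos n x) _

theorem CRep.W_le (R : CRep f Df δ a b) (hs : 0 ≤ s) {n m : ℕ} {x u : Λ} {c : ℝ} (hc : 0 < c)
    (h : orbDeriv f Df n x ≤ c * orbDeriv f Df m u) :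
    WW f Df s m u ≤ ENNReal.ofReal (c ^ s) * WW f Df s n x := by
  unfold WW
  have hx := R.orb_pos n x
  have hu := R.orb_pos m u
  rw [← ENNReal.ofReal_mul (by positivity)]
  refine ENNReal.ofReal_le_ofReal ?_
  have h1 : orbDeriv f Df n x / c ≤ orbDeriv f Df m u := by
    rw [div_le_iff₀ hc]; linarith
  have h2 := Real.rpow_le_rpow_of_nonpos (by positivity) h1 (show -s ≤ 0 by linarith)
  refine h2.trans (le_of_eq ?_)
  rw [Real.div_rpow hx.le hc.le, Real.rpow_neg hc.le, div_inv_eq_mul, mul_comm]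

theorem EE_zero (y : Λ) : EE f Df s 0 y = 1 := by
  unfold EE WW
  simp [orbDeriv]

theorem CRep.EE_add (R : CRep f Df δ a b) (m n : ℕ) (y : Λ) :
    EE f Df s (m + n) y = ∑' z, if f^[n] z = y then EE f Df s m z * WW f Df s n z else 0 := by
  have h1 : ∀ z, (if f^[n] z = y then EE f Df s m z * WW f Df s n z else 0) =
      ∑' x, if f^[m] x = z then (if f^[n] z = y then WW f Df s m x * WW f Df s n z else 0) else 0 := by
    intro z
    split_ifs with hz
    · unfold EE
      rw [← ENNReal.tsum_mul_right]
      refine tsum_congr fun x => ?_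
      split_ifs <;> simp
    · simp
  simp_rw [h1]
  rw [ENNReal.tsum_comm]
  unfold EE
  refine tsum_congr fun x => ?_
  rw [tsum_eq_single (f^[m] x) (fun z hz => if_neg (Ne.symm hz)), if_pos rfl, R.W_add,
    add_comm m n, Function.iterate_add_apply]

theorem CRep.EE_le_of (R : CRep f Df δ a b) {m : ℕ} {c : ℝ≥0∞} (h : ∀ z, EE f Df s m z ≤ c)
    (n : ℕ) (y : Λ) : EE f Df s (m + n) y ≤ c * EE f Df s n y := by
  rw [R.EE_add]
  conv_rhs => unfold EE
  rw [← ENNReal.tsum_mul_left]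
  refine ENNReal.tsum_le_tsum fun z => ?_
  split_ifs
  · gcongr; exact h z
  · simp

theorem CRep.le_EE_of (R : CRep f Df δ a b) {m : ℕ} {c : ℝ≥0∞} (h : ∀ z, c ≤ EE f Df s m z)
    (n : ℕ) (y : Λ) : c * EE f Df s n y ≤ EE f Df s (m + n) y := by
  rw [R.EE_add]
  conv_lhs => unfold EE
  rw [← ENNReal.tsum_mul_left]
  refine ENNReal.tsum_le_tsum fun z => ?_
  split_ifs
  · gcongr; exact h z
  · simp

theorem CRep.EE_le_pow (R : CRep f Df δ a b) {m : ℕ} {c : ℝ≥0∞} (h : ∀ z, EE f Df s m z ≤ c)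
    (k : ℕ) (y : Λ) : EE f Df s (k * m) y ≤ c ^ k := by
  induction k generalizing y with
  | zero => simp [EE_zero]
  | succ k ih =>
    rw [add_mul, one_mul, pow_succ]
    exact (R.EE_le_of ih m y).trans (by gcongr; exact h y)

theorem CRep.pow_le_EE (R : CRep f Df δ a b) {m : ℕ} {c : ℝ≥0∞} (h : ∀ z, c ≤ EE f Df s m z)
    (k : ℕ) (y : Λ) : c ^ k ≤ EE f Df s (k * m) y := by
  induction k generalizing y with
  | zero => simp [EE_zero]
  | succ k ih =>
    rw [add_mul, one_mul, pow_succ]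
    exact le_trans (by gcongr; exact h y) (R.le_EE_of ih m y)

theorem EE_subtype (n : ℕ) (y : Λ) :
    EE f Df s n y = ∑' x : ↥(f^[n] ⁻¹' {y}), WW f Df s n x := by
  rw [tsum_subtype]
  unfold EE
  refine tsum_congr fun x => ?_
  simp [indicator]

theorem CRep.EE_one (R : CRep f Df δ a b) [CompactSpace Λ] (hs : 0 ≤ s) :
    ∃ N : ℕ, ∀ y, EE f Df s 1 y ≤ N := by
  have hδ := R.hδ
  obtain ⟨t, -, htf, htc⟩ := (isCompact_univ : IsCompact (univ : Set Λ)).finite_cover_balls (half_pos hδ)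
  have hc : ∀ x : Λ, ∃ c : t, dist x c < δ / 2 := by
    intro x
    have := htc (mem_univ x)
    simp only [mem_iUnion, mem_ball] at this
    obtain ⟨c, hc, h⟩ := this
    exact ⟨⟨c, hc⟩, h⟩
  choose c hc using hc
  have := htf.fintype
  refine ⟨Fintype.card t, fun y => ?_⟩
  rw [EE_subtype]
  have hinj : Function.Injective (fun x : ↥(f^[1] ⁻¹' {y}) => c x) := by
    rintro ⟨u, hu⟩ ⟨v, hv⟩ huv
    have h1 : dist u v < δ := by
      have := dist_triangle_right u v (c u)
      have h2 := hc v
      have h3 : c u = c v := huv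
      rw [← h3] at h2
      linarith [hc u]
    have h2 := R.lo u v h1
    have h3 : f u = f v := by
      have e1 : f u = y := hu
      have e2 : f v = y := hv
      rw [e1, e2]
    rw [h3, dist_self] at h2
    have h4 : dist u v = 0 := by
      have := R.ha
      have : 0 ≤ dist u v := dist_nonneg
      nlinarith
    exact Subtype.ext (dist_eq_zero.1 h4)
  calc ∑' x : ↥(f^[1] ⁻¹' {y}), WW f Df s 1 x ≤ ∑' x : ↥(f^[1] ⁻¹' {y}), (fun _ : t => (1 : ℝ≥0∞)) (c x) :=
        ENNReal.tsum_le_tsum fun x => R.W_le_one hs 1 x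
    _ ≤ ∑' _ : t, (1 : ℝ≥0∞) := ENNReal.tsum_comp_le_tsum_of_injective hinj _
    _ = _ := by simp [tsum_fintype]

theorem CRep.EE_bdd (R : CRep f Df δ a b) [CompactSpace Λ] (hs : 0 ≤ s) (n : ℕ) :
    ∃ N : ℕ, ∀ y, EE f Df s n y ≤ N := by
  obtain ⟨N, hN⟩ := R.EE_one hs
  refine ⟨N ^ n, fun y => ?_⟩
  have := R.EE_le_pow hN n y
  simpa using this

theorem CRep.EE_ne_top (R : CRep f Df δ a b) [CompactSpace Λ] (hs : 0 ≤ s) (n : ℕ) (y : Λ) :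
    EE f Df s n y ≠ ⊤ := by
  obtain ⟨N, hN⟩ := R.EE_bdd hs n
  exact ne_top_of_le_ne_top (by simp) (hN y)

theorem CRep.EE_pos (R : CRep f Df δ a b) (hsurj : Function.Surjective f) (n : ℕ) (y : Λ) :
    0 < EE f Df s n y := by
  obtain ⟨x, hx⟩ := hsurj.iterate n y
  have := ENNReal.le_tsum (f := fun x => if f^[n] x = y then WW f Df s n x else 0) x
  rw [if_pos hx] at this
  exact (R.W_pos n x).trans_le this

theorem CRep.EE_real (R : CRep f Df δ a b) (n : ℕ) (y : Λ) :
    ∑' x : ↥(f^[n] ⁻¹' {y}), orbDeriv f Df n (x : Λ) ^ (-s) = (EE f Df s n y).toReal := by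
  rw [EE_subtype, ENNReal.tsum_toReal_eq (by simp [WW])]
  refine tsum_congr fun x => ?_
  rw [WW, ENNReal.toReal_ofReal (Real.rpow_nonneg (R.orb_pos _ _).le _)]

theorem CRep.EE_near (R : CRep f Df δ a b) (hs : 0 ≤ s) {A : ℝ}
    (hA : ∀ n, ∑ k ∈ Finset.range n, distMod f Df δ (scl δ a k) ≤ A)
    (n : ℕ) {y y' : Λ} (h : dist y' y < δ / 2) :
    EE f Df s n y ≤ ENNReal.ofReal (Real.exp A ^ s) * EE f Df s n y' := by
  have hg : ∀ x : ↥(f^[n] ⁻¹' {y}), ∃ u : ↥(f^[n] ⁻¹' {y'}), Sh f δ n x u := by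
    rintro ⟨x, hx⟩
    have hx' : f^[n] x = y := hx
    obtain ⟨u, hu, hsu⟩ := R.exists_sh n x y' (by rw [hx']; exact h)
    exact ⟨⟨u, hu⟩, hsu⟩
  choose g hg using hg
  have hinj : Function.Injective g := by
    intro u v huv
    have h1 := (hg u).symm
    have h2 := (hg v).symm
    rw [← huv] at h2
    refine Subtype.ext (h1.inj R h2 ?_)
    have e1 : f^[n] (u : Λ) = y := u.2
    have e2 : f^[n] (v : Λ) = y := v.2
    rw [e1, e2]
  rw [EE_subtype, EE_subtype]
  calc ∑' x : ↥(f^[n] ⁻¹' {y}), WW f Df s n x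
      ≤ ∑' x : ↥(f^[n] ⁻¹' {y}), ENNReal.ofReal (Real.exp A ^ s) * WW f Df s n (g x) := by
        refine ENNReal.tsum_le_tsum fun x => R.W_le hs (Real.exp_pos A) ?_
        refine ((hg x).symm.orb R).trans ?_
        have := R.orb_pos n (x : Λ)
        gcongr
        exact hA n
    _ = ENNReal.ofReal (Real.exp A ^ s) * ∑' x : ↥(f^[n] ⁻¹' {y}), WW f Df s n (g x) :=
        ENNReal.tsum_mul_left
    _ ≤ _ := by
        gcongr
        exact ENNReal.tsum_comp_le_tsum_of_injective hinj (fun u : ↥(f^[n] ⁻¹' {y'}) => WW f Df s n u)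

theorem CRep.EE_mix (R : CRep f Df δ a b) (hs : 0 ≤ s) {A : ℝ}
    (hA : ∀ n, ∑ k ∈ Finset.range n, distMod f Df δ (scl δ a k) ≤ A)
    {n₀ : ℕ} (hmix : ∀ x : Λ, f^[n₀] '' ball x (δ / 2) = Set.univ) (hb : 0 < b)
    (n : ℕ) (y y' : Λ) :
    EE f Df s n y' ≤ ENNReal.ofReal (Real.exp A ^ s) * ENNReal.ofReal ((b ^ n₀) ^ s) *
      EE f Df s (n + n₀) y := by
  obtain ⟨z, hz, hzy⟩ : y ∈ f^[n₀] '' ball y' (δ / 2) := by rw [hmix]; trivial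
  have h1 := R.EE_near hs hA n (show dist z y' < δ / 2 from hz)
  refine h1.trans ?_
  rw [mul_assoc]
  gcongr
  rw [R.EE_add]
  have h2 := ENNReal.le_tsum (f := fun z => if f^[n₀] z = y then
    EE f Df s n z * WW f Df s n₀ z else 0) z
  rw [if_pos hzy] at h2
  refine le_trans ?_ (mul_le_mul_right h2 _)
  have h3 : (1 : ℝ≥0∞) ≤ ENNReal.ofReal ((b ^ n₀) ^ s) * WW f Df s n₀ z := by
    have := R.W_le hs (n := n₀) (m := 0) (x := z) (u := z) (c := b ^ n₀) (by positivity)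
      (by simpa [orbDeriv] using R.orb_le n₀ z)
    simpa [WW, orbDeriv] using this
  calc EE f Df s n z = EE f Df s n z * 1 := by simp
    _ ≤ EE f Df s n z * (ENNReal.ofReal ((b ^ n₀) ^ s) * WW f Df s n₀ z) := by gcongr
    _ = _ := by ring

theorem CRep.exists_gt [CompactSpace Λ] [Nonempty Λ] (R : CRep f Df δ a b) (hs : 0 ≤ s)
    (hsurj : Function.Surjective f)
    (hP : Tendsto (fun n : ℕ => (n : ℝ)⁻¹ * Real.log (Mn f Df s n)) atTop (𝓝 0)) (n : ℕ) :
    ∃ y, (1 / 2 : ℝ≥0∞) ≤ EE f Df s n y := by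
  by_contra hcon
  push Not at hcon
  have hn : 0 < n := by
    rcases Nat.eq_zero_or_pos n with rfl | h
    · obtain ⟨y⟩ := ‹Nonempty Λ›
      have := hcon y
      rw [EE_zero] at this
      exact absurd this (by simp)
    · exact h
  have ht : Tendsto (fun k : ℕ => k * n) atTop atTop := tendsto_id.atTop_mul_const' hn
  have h1 := hP.comp ht
  have h2 : ∀ᶠ k : ℕ in atTop, ((fun n : ℕ => (n : ℝ)⁻¹ * Real.log (Mn f Df s n)) ∘
      (fun k : ℕ => k * n)) k ≤ (n : ℝ)⁻¹ * Real.log (1 / 2) := by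
    filter_upwards [eventually_gt_atTop 0] with k hk
    obtain ⟨N, hN⟩ := R.EE_bdd hs (k * n)
    have hM : Mn f Df s (k * n) ≤ (1 / 2) ^ k := by
      refine ciSup_le fun y => ?_
      rw [R.EE_real]
      have := R.EE_le_pow (fun z => (hcon z).le) k y
      have := ENNReal.toReal_mono (by simp) this
      simpa using this
    have hM0 : 0 < Mn f Df s (k * n) := by
      obtain ⟨y⟩ := ‹Nonempty Λ›
      refine lt_of_lt_of_le (ENNReal.toReal_pos (R.EE_pos (s := s) hsurj (k * n) y).ne'
        (R.EE_ne_top hs (k * n) y)) ?_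
      rw [← R.EE_real]
      refine le_ciSup (f := fun y => ∑' x : ↥(f^[k * n] ⁻¹' {y}), orbDeriv f Df (k * n) (x : Λ) ^ (-s))
        ⟨N, ?_⟩ y
      rintro _ ⟨y, rfl⟩
      simp only
      rw [R.EE_real]
      have := ENNReal.toReal_mono (by simp) (hN y)
      simpa using this
    have hl := Real.log_le_log hM0 hM
    rw [Real.log_pow] at hl
    have hk' : (0 : ℝ) < k := by exact_mod_cast hk
    have hn' : (0 : ℝ) < n := by exact_mod_cast hn
    simp only [Function.comp]
    push_cast
    calc ((k : ℝ) * n)⁻¹ * Real.log (Mn f Df s (k * n)) ≤ ((k : ℝ) * n)⁻¹ * (k * Real.log (1 / 2)) := by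
          gcongr
      _ = _ := by field_simp
  have h3 := le_of_tendsto h1 h2
  have h4 : Real.log (1 / 2) < 0 := Real.log_neg (by norm_num) (by norm_num)
  have hn' : (0 : ℝ) < (n : ℝ)⁻¹ := by positivity
  nlinarith

theorem CRep.exists_lt [CompactSpace Λ] [Nonempty Λ] (R : CRep f Df δ a b) (hs : 0 ≤ s)
    (hP : Tendsto (fun n : ℕ => (n : ℝ)⁻¹ * Real.log (mn f Df s n)) atTop (𝓝 0)) (n : ℕ) :
    ∃ y, EE f Df s n y ≤ 2 := by
  by_contra hcon
  push Not at hcon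
  have hn : 0 < n := by
    rcases Nat.eq_zero_or_pos n with rfl | h
    · obtain ⟨y⟩ := ‹Nonempty Λ›
      have := hcon y
      rw [EE_zero] at this
      exact absurd this (by simp)
    · exact h
  have ht : Tendsto (fun k : ℕ => k * n) atTop atTop := tendsto_id.atTop_mul_const' hn
  have h1 := hP.comp ht
  have h2 : ∀ᶠ k : ℕ in atTop, (n : ℝ)⁻¹ * Real.log 2 ≤
      ((fun n : ℕ => (n : ℝ)⁻¹ * Real.log (mn f Df s n)) ∘ (fun k : ℕ => k * n)) k := by
    filter_upwards [eventually_gt_atTop 0] with k hk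
    have hM : 2 ^ k ≤ mn f Df s (k * n) := by
      refine le_ciInf fun y => ?_
      rw [R.EE_real]
      have := R.pow_le_EE (fun z => (hcon z).le) k y
      have := ENNReal.toReal_mono (R.EE_ne_top hs _ _) this
      simpa using this
    have hl := Real.log_le_log (by positivity) hM
    rw [Real.log_pow] at hl
    have hk' : (0 : ℝ) < k := by exact_mod_cast hk
    have hn' : (0 : ℝ) < n := by exact_mod_cast hn
    simp only [Function.comp]
    push_cast
    calc _ = ((k : ℝ) * n)⁻¹ * (k * Real.log 2) := by field_simp
      _ ≤ _ := by gcongr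
  have h3 := ge_of_tendsto h1 h2
  have h4 : 0 < Real.log 2 := Real.log_pos (by norm_num)
  have hn' : (0 : ℝ) < (n : ℝ)⁻¹ := by positivity
  nlinarith

end

section
variable {Λ : Type*} [MetricSpace Λ] {f : Λ → Λ} {Df : Λ → ℝ} {δ a b s : ℝ}

theorem CRep.upper [CompactSpace Λ] [MeasurableSpace Λ] [BorelSpace Λ]
    (R : CRep f Df δ a b) (hs : 0 ≤ s) {A : ℝ}
    (hA : ∀ n, ∑ k ∈ Finset.range n, distMod f Df δ (scl δ a k) ≤ A)
    {K : ℝ≥0∞} (hK : K ≠ ⊤) (hE : ∀ n y, EE f Df s n y ≤ K) :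
    μH[s] (Set.univ : Set Λ) < ⊤ := by
  have hδ := R.hδ
  have ha := R.ha
  obtain ⟨F, -, hFf, hFc⟩ :=
    (isCompact_univ : IsCompact (univ : Set Λ)).finite_cover_balls (half_pos hδ)
  set D : ℝ := δ * Real.exp A with hD
  have hD0 : 0 < D := by positivity
  have hdiam : ∀ n x, ediam {u | Sh f δ n x u} ≤ ENNReal.ofReal (D / orbDeriv f Df n x) := by
    intro n x
    refine ediam_le fun u hu v hv => ?_
    rw [edist_dist]
    refine ENNReal.ofReal_le_ofReal ?_
    have ho := R.orb_pos n x
    rw [le_div_iff₀ ho, mul_comm]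
    have h1 := (Sh.distort R hu hv).2
    have h2 := dist_triangle_right (f^[n] u) (f^[n] v) (f^[n] x)
    have h3 : dist (f^[n] u) (f^[n] v) ≤ δ := by linarith [hu.2, hv.2]
    calc _ ≤ _ := h1
      _ ≤ Real.exp A * δ := by gcongr; exact hA n
      _ = D := by rw [hD]; ring
  have hfin : ∀ n, Finite {x : Λ // f^[n] x ∈ F} := by
    intro n
    have hone : ∀ y, (f^[n] ⁻¹' {y}).Finite := by
      intro y
      by_contra hinf
      have hinf' : Infinite ↥(f^[n] ⁻¹' {y}) := Set.infinite_coe_iff.2 hinf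
      have h0 : EE f Df 0 n y = ⊤ := by
        rw [EE_subtype]
        simp [WW, ENNReal.tsum_const]
      exact R.EE_ne_top le_rfl n y h0
    have : (f^[n] ⁻¹' F).Finite := by
      have : f^[n] ⁻¹' F = ⋃ y ∈ F, f^[n] ⁻¹' {y} := by ext; simp
      rw [this]
      exact hFf.biUnion fun y _ => hone y
    exact this.to_subtype
  have hmain := Measure.hausdorffMeasure_le_liminf_tsum (X := Λ) (ι := fun n : ℕ => {x : Λ // f^[n] x ∈ F})
    s (univ : Set Λ) (l := atTop) (fun n => ENNReal.ofReal (D * (a⁻¹) ^ n)) (by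
      rw [← ENNReal.ofReal_zero]
      refine ENNReal.tendsto_ofReal ?_
      have := (tendsto_pow_atTop_nhds_zero_of_lt_one (r := a⁻¹) (by positivity)
        (inv_lt_one_of_one_lt₀ ha)).const_mul D
      simpa using this) (fun n x => {u | Sh f δ n x u})
    (Eventually.of_forall fun n x => (hdiam n x).trans (ENNReal.ofReal_le_ofReal (by
      rw [div_eq_mul_inv, inv_pow]
      gcongr
      exact R.orb_ge n x)))
    (Eventually.of_forall fun n u _ => by
      have := hFc (mem_univ (f^[n] u))
      simp only [mem_iUnion, mem_ball] at this
      obtain ⟨y, hy, h⟩ := this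
      obtain ⟨x, hx, hsx⟩ := R.exists_sh n u y (by rw [dist_comm]; exact h)
      exact mem_iUnion.2 ⟨⟨x, by rw [hx]; exact hy⟩, hsx.symm⟩)
  refine hmain.trans_lt ?_
  have hb : ∀ n : ℕ, ∑' i : {x : Λ // f^[n] x ∈ F}, ediam {u | Sh f δ n i u} ^ s ≤
      ENNReal.ofReal (D ^ s) * (hFf.toFinset.card * K) := by
    intro n
    calc ∑' i : {x : Λ // f^[n] x ∈ F}, ediam {u | Sh f δ n i u} ^ s
        ≤ ∑' i : {x : Λ // f^[n] x ∈ F}, ENNReal.ofReal (D ^ s) * WW f Df s n i := by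
          refine ENNReal.tsum_le_tsum fun i => ?_
          have ho := R.orb_pos n (i : Λ)
          refine (ENNReal.rpow_le_rpow (hdiam n i) hs).trans (le_of_eq ?_)
          rw [ENNReal.ofReal_rpow_of_nonneg (by positivity) hs, WW, ← ENNReal.ofReal_mul (by positivity),
            Real.div_rpow hD0.le ho.le, Real.rpow_neg ho.le, div_eq_mul_inv]
      _ = ENNReal.ofReal (D ^ s) * ∑' i : {x : Λ // f^[n] x ∈ F}, WW f Df s n i :=
          ENNReal.tsum_mul_left
      _ ≤ ENNReal.ofReal (D ^ s) * ∑ y ∈ hFf.toFinset, EE f Df s n y := by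
          gcongr
          have e1 : ∑' i : {x : Λ // f^[n] x ∈ F}, WW f Df s n i =
              ∑' x, (f^[n] ⁻¹' F).indicator (WW f Df s n) x :=
            tsum_subtype (f^[n] ⁻¹' F) (WW f Df s n)
          rw [e1]
          unfold EE
          rw [← Summable.tsum_finsetSum (fun _ _ => ENNReal.summable)]
          refine ENNReal.tsum_le_tsum fun x => ?_
          by_cases hx : f^[n] x ∈ F
          · rw [indicator_of_mem (show x ∈ f^[n] ⁻¹' F from hx)]
            have := Finset.single_le_sum
              (f := fun y => if f^[n] x = y then WW f Df s n x else 0)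
              (fun _ _ => zero_le) (hFf.mem_toFinset.2 hx)
            simpa using this
          · rw [indicator_of_notMem (show x ∉ f^[n] ⁻¹' F from hx)]
            exact zero_le
      _ ≤ ENNReal.ofReal (D ^ s) * (hFf.toFinset.card * K) := by
          gcongr
          have := Finset.sum_le_card_nsmul hFf.toFinset (EE f Df s n) K (fun y _ => hE n y)
          simpa using this
  have hlim : liminf (fun n : ℕ => ∑' i : {x : Λ // f^[n] x ∈ F}, ediam {u | Sh f δ n i u} ^ s) atTop ≤
      ENNReal.ofReal (D ^ s) * (hFf.toFinset.card * K) := by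
    refine (liminf_le_liminf (Eventually.of_forall hb)).trans ?_
    simp
  refine hlim.trans_lt ?_
  exact ENNReal.mul_lt_top ENNReal.ofReal_lt_top
    (ENNReal.mul_lt_top (by simp) hK.lt_top)

theorem CRep.ball_sh (R : CRep f Df δ a b) {A : ℝ} (hA0 : 0 ≤ A)
    (hA : ∀ n, ∑ k ∈ Finset.range n, distMod f Df δ (scl δ a k) ≤ A)
    (x : Λ) {ρ : ℝ} (hρ : 0 < ρ) (hρ' : Real.exp A * b * ρ < δ / 2) :
    ∃ k, (∀ u ∈ ball x ρ, Sh f δ k x u) ∧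
      δ / 2 ≤ Real.exp A * b * b * ρ * orbDeriv f Df k x := by
  have ha := R.ha
  have hδ := R.hδ
  have hb : 1 < b := by linarith [R.Dlo x, R.Dhi x]
  have hex : ∃ k, δ / 2 ≤ Real.exp A * b * ρ * orbDeriv f Df (k + 1) x := by
    obtain ⟨k, hk⟩ := pow_unbounded_of_one_lt (δ / 2 / (Real.exp A * b * ρ)) ha
    refine ⟨k, ?_⟩
    have h1 := R.orb_ge (k + 1) x
    have h2 : a ^ k ≤ a ^ (k + 1) := pow_le_pow_right₀ ha.le (by omega)
    have hp : 0 < Real.exp A * b * ρ := by positivity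
    rw [div_lt_iff₀ hp] at hk
    have : a ^ k * (Real.exp A * b * ρ) ≤ orbDeriv f Df (k + 1) x * (Real.exp A * b * ρ) := by
      gcongr; linarith
    linarith
  set k := Nat.find hex with hkdef
  have hk := Nat.find_spec hex
  have hmin : ∀ j ≤ k, Real.exp A * b * ρ * orbDeriv f Df j x < δ / 2 := by
    intro j hj
    cases j with
    | zero => simpa [orbDeriv] using hρ'
    | succ j =>
      have := Nat.find_min hex (m := j) (by omega)
      push Not at this
      exact this
  refine ⟨k, fun u hu => ?_, ?_⟩
  · have hux : dist u x < ρ := hu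
    have key : ∀ j ≤ k, Sh f δ j x u := by
      intro j
      induction j with
      | zero =>
        intro _
        refine ⟨by simp, ?_⟩
        have h1 : 1 ≤ Real.exp A := Real.one_le_exp hA0
        have h2 : 1 ≤ Real.exp A * b := by nlinarith
        simp only [Function.iterate_zero, id]
        nlinarith
      | succ j ih =>
        intro hj
        have hsh := ih (by omega)
        have hself : Sh f δ j x x := ⟨by simp [hδ], by simp [hδ]⟩
        have h1 := (hsh.distort R hself).1
        have hd : dist (f^[j] u) (f^[j] x) < δ := by linarith [hsh.2]
        refine ⟨fun i hi => ?_, ?_⟩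
        · rcases Nat.lt_succ_iff_lt_or_eq.1 hi with h | rfl
          · exact hsh.1 i h
          · exact hd
        · rw [Function.iterate_succ_apply', Function.iterate_succ_apply']
          have ho := R.orb_pos j x
          calc _ ≤ b * dist (f^[j] u) (f^[j] x) := R.hi _ _ hd
            _ ≤ b * (Real.exp A * orbDeriv f Df j x * ρ) := by
              gcongr
              refine h1.trans ?_
              gcongr
              exact hA j
            _ = Real.exp A * b * ρ * orbDeriv f Df j x := by ring
            _ < δ / 2 := hmin j (by omega)
    exact key k le_rfl
  · refine hk.trans ?_
    have h1 : orbDeriv f Df (k + 1) x ≤ orbDeriv f Df k x * b := by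
      rw [orb_add]
      have := R.orb_pos k x
      gcongr
      simpa using R.orb_le 1 (f^[k] x)
    calc _ ≤ Real.exp A * b * ρ * (orbDeriv f Df k x * b) := by gcongr
      _ = _ := by ring

theorem CRep.ball_sum (R : CRep f Df δ a b) (hs : 0 ≤ s) {A : ℝ} (hA0 : 0 ≤ A)
    (hA : ∀ n, ∑ k ∈ Finset.range n, distMod f Df δ (scl δ a k) ≤ A)
    {K : ℝ≥0∞} (hE : ∀ n y, EE f Df s n y ≤ K)
    (x : Λ) {ρ : ℝ} (hρ : 0 < ρ) (hρ' : Real.exp A * b * ρ < δ / 2) :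
    ∃ k, ∀ n ≥ k, ∀ y, ∑' z, (if f^[n] z = y ∧ z ∈ ball x ρ then WW f Df s n z else 0) ≤
      ENNReal.ofReal (Real.exp A ^ s) * ENNReal.ofReal ((Real.exp A * b * b / (δ / 2)) ^ s) * K *
        ENNReal.ofReal ρ ^ s := by
  have hδ := R.hδ
  have ha := R.ha
  have hb : 1 < b := by linarith [R.Dlo x, R.Dhi x]
  obtain ⟨k, hk, hk'⟩ := R.ball_sh hA0 hA x hρ hρ'
  refine ⟨k, fun n hn y => ?_⟩
  obtain ⟨m, rfl⟩ := Nat.exists_eq_add_of_le hn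
  set c := Real.exp A * b * b / (δ / 2) with hc
  have hc0 : 0 < c := by positivity
  have hW : WW f Df s k x ≤ ENNReal.ofReal (c ^ s) * ENNReal.ofReal ρ ^ s := by
    have := R.W_le hs (n := 0) (m := k) (x := x) (u := x) (c := c * ρ) (by positivity) (by
      simp only [orbDeriv, Finset.range_zero, Finset.prod_empty]
      change 1 ≤ c * ρ * orbDeriv f Df k x
      rw [hc, div_mul_eq_mul_div, div_mul_eq_mul_div, one_le_div (by positivity)]
      exact hk')
    rw [ENNReal.ofReal_rpow_of_nonneg hρ.le hs, ← ENNReal.ofReal_mul (by positivity),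
      ← Real.mul_rpow hc0.le hρ.le]
    simpa [WW, orbDeriv] using this
  set S : Set Λ := {z | f^[k + m] z = y ∧ z ∈ ball x ρ} with hS
  have e1 : ∑' z, (if f^[k + m] z = y ∧ z ∈ ball x ρ then WW f Df s (k + m) z else 0) =
      ∑' z : S, WW f Df s (k + m) z := by
    rw [tsum_subtype]
    refine tsum_congr fun z => ?_
    simp [indicator, hS]
  rw [e1]
  have hmem : ∀ z : S, f^[k] (z : Λ) ∈ f^[m] ⁻¹' {y} := by
    intro z
    have := z.2.1
    rw [add_comm, Function.iterate_add_apply] at this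
    exact this
  set g : S → ↥(f^[m] ⁻¹' {y}) := fun z => ⟨f^[k] (z : Λ), hmem z⟩ with hg
  have hinj : Function.Injective g := by
    intro u v huv
    exact Subtype.ext ((hk u u.2.2).inj R (hk v v.2.2) (congrArg Subtype.val huv))
  calc ∑' z : S, WW f Df s (k + m) z
      ≤ ∑' z : S, (ENNReal.ofReal (Real.exp A ^ s) * (ENNReal.ofReal (c ^ s) * ENNReal.ofReal ρ ^ s)) *
          WW f Df s m (g z) := by
        refine ENNReal.tsum_le_tsum fun z => ?_
        rw [R.W_add]
        gcongr
        refine (R.W_le hs (n := k) (x := x) (Real.exp_pos A) ?_).trans (by gcongr)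
        refine ((hk z z.2.2).orb R).trans ?_
        have := R.orb_pos k (z : Λ)
        gcongr
        exact hA k
    _ = (ENNReal.ofReal (Real.exp A ^ s) * (ENNReal.ofReal (c ^ s) * ENNReal.ofReal ρ ^ s)) *
          ∑' z : S, WW f Df s m (g z) := ENNReal.tsum_mul_left
    _ ≤ (ENNReal.ofReal (Real.exp A ^ s) * (ENNReal.ofReal (c ^ s) * ENNReal.ofReal ρ ^ s)) * K := by
        gcongr
        refine le_trans (ENNReal.tsum_comp_le_tsum_of_injective hinj
          (fun u : ↥(f^[m] ⁻¹' {y}) => WW f Df s m u)) ?_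
        rw [← EE_subtype]
        exact hE m y
    _ = _ := by ring

theorem CRep.lower [CompactSpace Λ] [Nonempty Λ] [MeasurableSpace Λ] [BorelSpace Λ]
    (R : CRep f Df δ a b) (hs : 0 ≤ s) {A : ℝ} (hA0 : 0 ≤ A)
    (hA : ∀ n, ∑ k ∈ Finset.range n, distMod f Df δ (scl δ a k) ≤ A)
    {K c₀ : ℝ≥0∞} {n₀ : ℕ} (hK : K ≠ ⊤) (hE : ∀ n y, EE f Df s n y ≤ K)
    (hc₀ : 0 < c₀) (hE' : ∀ n y, c₀ ≤ EE f Df s (n + n₀) y) :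
    0 < μH[s] (Set.univ : Set Λ) := by
  have hδ := R.hδ
  have ha := R.ha
  obtain ⟨y₀⟩ := ‹Nonempty Λ›
  have hb : 1 < b := by linarith [R.Dlo y₀, R.Dhi y₀]
  rcases hs.eq_or_lt with rfl | hs'
  · have h1 : μH[0] ({y₀} : Set Λ) = 1 := Measure.hausdorffMeasure_zero_singleton y₀
    have h2 : μH[0] ({y₀} : Set Λ) ≤ μH[0] (univ : Set Λ) := measure_mono (subset_univ _)
    rw [h1] at h2
    exact zero_lt_one.trans_le h2
  set C : ℝ≥0∞ := ENNReal.ofReal (Real.exp A ^ s) *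
    ENNReal.ofReal ((Real.exp A * b * b / (δ / 2)) ^ s) * K with hC
  have hCtop : C ≠ ⊤ := ENNReal.mul_ne_top (ENNReal.mul_ne_top (by simp) (by simp)) hK
  have hc₀top : c₀ ≠ ⊤ := ne_top_of_le_ne_top hK ((hE' 0 y₀).trans (hE _ _))
  set η : ℝ≥0∞ := c₀ / (2 * (C + 1)) with hη
  have hC1 : 2 * (C + 1) ≠ ⊤ := by finiteness
  have hη0 : η ≠ 0 := (ENNReal.div_pos hc₀.ne' hC1).ne'
  have hηtop : η ≠ ⊤ := ENNReal.div_ne_top hc₀top (by simp)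
  have hηc : c₀ = (C + 1) * η + (C + 1) * η := by
    rw [← two_mul, ← mul_assoc, hη, ENNReal.mul_div_cancel (by simp) hC1]
  set ρ₁ : ℝ := δ / 2 / (Real.exp A * b) with hρ₁
  have hρ₁0 : 0 < ρ₁ := by positivity
  suffices h : η ≤ μH[s] (Set.univ : Set Λ) from (pos_iff_ne_zero.2 hη0).trans_le h
  rw [Measure.hausdorffMeasure_apply]
  refine le_iSup₂_of_le (ENNReal.ofReal (ρ₁ / 2)) (by simpa using hρ₁0) ?_
  refine le_iInf fun t => le_iInf fun ht => le_iInf fun htd => ?_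
  obtain ⟨ε, hε0, hε⟩ := ENNReal.exists_pos_sum_of_countable hη0 ℕ
  have hρ : ∀ i : ℕ, ∃ ρ : ℝ, 0 < ρ ∧ ρ < ρ₁ ∧ ediam (t i) < ENNReal.ofReal ρ ∧
      ENNReal.ofReal ρ ^ s ≤ ediam (t i) ^ s + ε i := by
    intro i
    have hdt : ediam (t i) ≠ ⊤ := ne_top_of_le_ne_top (by simp) (htd i)
    set d := (ediam (t i)).toReal with hd
    have hd0 : 0 ≤ d := ENNReal.toReal_nonneg
    have hde : ediam (t i) = ENNReal.ofReal d := (ENNReal.ofReal_toReal hdt).symm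
    have hd1 : d < ρ₁ := by
      have := htd i
      rw [hde, ENNReal.ofReal_le_ofReal_iff (by positivity)] at this
      linarith
    have hcts : Tendsto (fun ρ : ℝ => ρ ^ s) (𝓝[>] d) (𝓝 (d ^ s)) :=
      ((Real.continuous_rpow_const hs).tendsto d).mono_left nhdsWithin_le_nhds
    have hεi : (0 : ℝ) < ε i := by exact_mod_cast hε0 i
    have ev1 : ∀ᶠ ρ in 𝓝[>] d, ρ ^ s < d ^ s + ε i :=
      hcts.eventually_lt_const (by linarith)
    have ev2 : ∀ᶠ ρ in 𝓝[>] d, ρ < ρ₁ := nhdsWithin_le_nhds (Iio_mem_nhds hd1)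
    obtain ⟨ρ, h1, h2, h3⟩ := (ev1.and (ev2.and self_mem_nhdsWithin)).exists
    have h3' : d < ρ := h3
    have hρ0 : 0 < ρ := hd0.trans_lt h3'
    refine ⟨ρ, hρ0, h2, ?_, ?_⟩
    · rw [hde]; exact (ENNReal.ofReal_lt_ofReal_iff hρ0).2 h3'
    · rw [hde, ENNReal.ofReal_rpow_of_nonneg hρ0.le hs, ENNReal.ofReal_rpow_of_nonneg hd0 hs]
      refine (ENNReal.ofReal_le_ofReal h1.le).trans ?_
      rw [ENNReal.ofReal_add (by positivity) hεi.le, ENNReal.ofReal_coe_nnreal]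
  choose ρ hρ0 hρ1 hρd hρs using hρ
  choose p hp using fun i : {i : ℕ // (t i).Nonempty} => i.2
  have hcov : (univ : Set Λ) ⊆ ⋃ i : {i : ℕ // (t i).Nonempty}, ball (p i) (ρ i) := by
    intro z hz
    obtain ⟨i, hi⟩ := mem_iUnion.1 (ht hz)
    refine mem_iUnion.2 ⟨⟨i, ⟨z, hi⟩⟩, ?_⟩
    have h1 := (edist_le_ediam_of_mem hi (hp ⟨i, ⟨z, hi⟩⟩)).trans_lt (hρd i)
    rw [edist_dist] at h1
    exact (ENNReal.ofReal_lt_ofReal_iff (hρ0 i)).1 h1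
  obtain ⟨J, hJ⟩ := isCompact_univ.elim_finite_subcover _ (fun i => isOpen_ball) hcov
  have hk := fun i : {i : ℕ // (t i).Nonempty} =>
    R.ball_sum hs hA0 hA hE (p i) (hρ0 i) (by
      have h1 := hρ1 i
      rw [hρ₁, lt_div_iff₀ (by positivity)] at h1
      linarith)
  choose k hk using hk
  set n := J.sup k + n₀ with hn
  have h1 : c₀ ≤ ∑ i ∈ J, C * ENNReal.ofReal (ρ i) ^ s := by
    calc c₀ ≤ EE f Df s n y₀ := hE' _ _
      _ ≤ ∑' z, ∑ i ∈ J, (if f^[n] z = y₀ ∧ z ∈ ball (p i) (ρ i) then WW f Df s n z else 0) := by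
          unfold EE
          refine ENNReal.tsum_le_tsum fun z => ?_
          split_ifs with hz
          · obtain ⟨i, hi⟩ := mem_iUnion.1 (hJ (mem_univ z))
            obtain ⟨hiJ, hi⟩ := mem_iUnion.1 hi
            have := Finset.single_le_sum
              (f := fun i => if f^[n] z = y₀ ∧ z ∈ ball (p i) (ρ i) then WW f Df s n z else 0)
              (fun _ _ => zero_le) hiJ
            refine le_trans ?_ this
            rw [if_pos ⟨hz, hi⟩]
          · exact zero_le
      _ = ∑ i ∈ J, ∑' z, (if f^[n] z = y₀ ∧ z ∈ ball (p i) (ρ i) then WW f Df s n z else 0) :=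
          Summable.tsum_finsetSum (fun _ _ => ENNReal.summable)
      _ ≤ _ := by
          refine Finset.sum_le_sum fun i hi => hk i n ?_ y₀
          have : k i ≤ J.sup k := Finset.le_sup hi
          omega
  set T := ∑' n, ⨆ _ : (t n).Nonempty, ediam (t n) ^ s with hT
  have h2 : ∑ i ∈ J, C * ENNReal.ofReal (ρ i) ^ s ≤ C * (T + ∑' i, (ε i : ℝ≥0∞)) := by
    rw [← Finset.mul_sum]
    gcongr
    rw [hT, ← ENNReal.tsum_add]
    calc ∑ i ∈ J, ENNReal.ofReal (ρ i) ^ s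
        ≤ ∑ i ∈ J, (fun n => (⨆ _ : (t n).Nonempty, ediam (t n) ^ s) + (ε n : ℝ≥0∞)) (i : ℕ) := by
          refine Finset.sum_le_sum fun i hi => (hρs i).trans ?_
          simp only
          gcongr
          exact le_iSup (fun _ : (t i).Nonempty => ediam (t i) ^ s) i.2
      _ ≤ ∑' i : {i : ℕ // (t i).Nonempty},
          (fun n => (⨆ _ : (t n).Nonempty, ediam (t n) ^ s) + (ε n : ℝ≥0∞)) (i : ℕ) :=
          ENNReal.sum_le_tsum J
      _ ≤ _ := ENNReal.tsum_comp_le_tsum_of_injective Subtype.val_injective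
          (fun n => (⨆ _ : (t n).Nonempty, ediam (t n) ^ s) + (ε n : ℝ≥0∞))
  by_contra hcon
  push Not at hcon
  have h3 : C * (T + ∑' i, (ε i : ℝ≥0∞)) ≤ (C + 1) * T + (C + 1) * η := by
    rw [mul_add]
    gcongr <;> exact le_self_add
  have h4 : (C + 1) * T + (C + 1) * η < (C + 1) * η + (C + 1) * η := by
    refine ENNReal.add_lt_add_right (by finiteness) ?_
    exact (ENNReal.mul_lt_mul_iff_right (by simp) (by finiteness)).2 hcon
  rw [← hηc] at h4
  exact absurd (h1.trans (h2.trans h3)) (not_le.2 h4)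

end

/-- **Finiteness of the Hausdorff measure.** If `∫₀^{λ₀δ_f} ε(t)/t dt < ∞` then the
`s_crit`-dimensional Hausdorff measure of `Λ` is finite and positive. -/
theorem hausdorff_measure_finite {Λ : Type*} [MetricSpace Λ] [CompactSpace Λ] [Nonempty Λ]
    [MeasurableSpace Λ] [BorelSpace Λ]
    (hpt : ∀ x : Λ, (𝓝[≠] x).NeBot)
    (f : Λ → Λ) (Df : Λ → ℝ)
    (hcont : Continuous f) (hsurj : Function.Surjective f)
    (hconf : IsConfDeriv f Df)
    (hexp : UnifExpanding f Df)
    (hopen : IsOpenMap f)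
    (hfib : ∀ y : Λ, (f ⁻¹' {y}).Finite)
    (hmix : ∀ δ : ℝ, 0 < δ → ∃ n₀ : ℕ, ∀ x : Λ, f^[n₀] '' ball x δ = Set.univ)
    (β lam₀ lam₁ δf : ℝ)
    (hβ : 1 < β) (hDfβ : ∀ x : Λ, β ≤ Df x)
    (hlam₀ : 1 < lam₀) (hlam₀β : lam₀ < β) (hδf : 0 < δf)
    (hC2' : ∀ u v : Λ, u ≠ v → dist u v < δf →
      lam₀ ≤ dist (f u) (f v) / dist u v ∧ dist (f u) (f v) / dist u v ≤ lam₁)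
    (hC3' : ∀ x : Λ, ball (f x) δf ⊆ f '' ball x δf)
    -- the common finite pressure function and its unique zero `s_crit`
    (P : ℝ → ℝ)
    (hP : ∀ s : ℝ, 0 ≤ s →
      Filter.Tendsto (fun n : ℕ => (n : ℝ)⁻¹ * Real.log (mn f Df s n))
        Filter.atTop (𝓝 (P s)) ∧
      Filter.Tendsto (fun n : ℕ => (n : ℝ)⁻¹ * Real.log (Mn f Df s n))
        Filter.atTop (𝓝 (P s)))
    (scrit : ℝ) (hscrit₀ : 0 ≤ scrit) (hzero : P scrit = 0)
    (huniq : ∀ s : ℝ, 0 ≤ s → P s = 0 → s = scrit)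
    -- the Dini-type integrability condition on the distortion modulus
    (hdini : MeasureTheory.IntegrableOn (fun t : ℝ => distMod f Df δf t / t)
      (Set.Ioc 0 (lam₀ * δf))) :
    0 < μH[scrit] (Set.univ : Set Λ) ∧ μH[scrit] (Set.univ : Set Λ) < ⊤ := by
  have R : CRep f Df δf lam₀ lam₁ :=
    CRep.of hpt f Df hconf β lam₀ lam₁ δf hDfβ hlam₀ hlam₀β hδf hC2' hC3'
  obtain ⟨A, hA0, hA⟩ := R.dini hdini
  obtain ⟨hP1, hP2⟩ := hP scrit hscrit₀
  rw [hzero] at hP1 hP2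
  obtain ⟨n₀, hn₀⟩ := hmix (δf / 2) (half_pos hδf)
  obtain ⟨y₀⟩ := ‹Nonempty Λ›
  have hb : 0 < lam₁ := by linarith [R.Dlo y₀, R.Dhi y₀]
  set K₁ : ℝ≥0∞ := ENNReal.ofReal (Real.exp A ^ scrit) * ENNReal.ofReal ((lam₁ ^ n₀) ^ scrit)
    with hK₁
  have hK₁top : K₁ ≠ ⊤ := ENNReal.mul_ne_top (by simp) (by simp)
  have hm : ∀ n y y', EE f Df scrit n y' ≤ K₁ * EE f Df scrit (n + n₀) y :=
    fun n y y' => R.EE_mix hscrit₀ hA hn₀ hb n y y'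
  have hne : Nonempty Λ := ⟨y₀⟩
  have hE : ∀ n y, EE f Df scrit n y ≤ K₁ * 2 := by
    intro n y
    obtain ⟨z, hz⟩ := R.exists_lt hscrit₀ hP1 (n + n₀)
    exact (hm n z y).trans (by gcongr)
  have hE' : ∀ n y, (1 / 2) / K₁ ≤ EE f Df scrit (n + n₀) y := by
    intro n y
    obtain ⟨z, hz⟩ := R.exists_gt hscrit₀ hsurj hP2 n
    exact ENNReal.div_le_of_le_mul' (hz.trans (hm n y z))
  have hKtop : K₁ * 2 ≠ ⊤ := ENNReal.mul_ne_top hK₁top (by simp)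
  exact ⟨R.lower hscrit₀ hA0 hA hKtop hE (ENNReal.div_pos (by simp) hK₁top) hE',
    R.upper hscrit₀ hA hKtop hE⟩

end
end

section
/- Parameter dependence of the pressure: Let F=(f_n) and F̃=(f̃_n) be sequences in ℰ(Δ,β,ε) with d_∞(F,F̃) := sup_n d_ℰ(f_n,f̃_n) ≤ r ≤ ε(Δ). Then for all s≥0: |P̲(s,F) − P̲(s,F̃)| ≤ 2rs, and (1 + 2r/log β)^{-1} ≤ s̲_crit(F)/s̲_crit(F̃) ≤ 1 + 2r/log β. The same two bounds hold with P̲ replaced by P̄ and s̲_crit replaced by s̄_crit. -/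
open Filter Topology Metric Set MeasureTheory
open scoped Classical ENNReal

noncomputable section

/-- divided difference `f[u,x]`, equal to `Df x` on the diagonal. -/
def divq {K : Type*} [MetricSpace K] (f : K → K) (Df : K → ℝ) (u x : K) : ℝ :=
  if u = x then Df x else dist (f u) (f x) / dist u x

/-- The class `ℰ(Δ,β,ε)` of `C¹`-conformal unramified covering maps `f : Ω_f → K` of finite
maximal degree satisfying conditions (T0)–(T3). -/
structure ConfCover (K : Type*) [MetricSpace K] (Δ β : ℝ) (ε : ℝ → ℝ) where
  /-- the domain `Ω_f ⊆ K` -/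
  dom : Set K
  /-- the map (only its restriction to `dom` matters) -/
  toFun : K → K
  /-- the conformal derivative -/
  Df : K → ℝ
  /-- the local injectivity radius function `δ_f` -/
  δf : K → ℝ
  /-- the lower bound `δ(f)` for `δ_f` -/
  δ0 : ℝ
  /-- the upper dilation bound `λ₁(f)` -/
  lam1 : ℝ
  /-- a bound on the (finite) maximal degree -/
  degBound : ℕ
  δ0_pos : 0 < δ0
  δf_mem : ∀ x ∈ dom, δ0 ≤ δf x ∧ δf x ≤ Δ
  /-- `f` maps `Ω_f` onto `K` -/
  surj : ∀ y : K, ∃ x ∈ dom, toFun x = y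
  /-- fibers are finite -/
  fiber_finite : ∀ y : K, (dom ∩ toFun ⁻¹' {y}).Finite
  /-- finite maximal degree -/
  fiber_card : ∀ y : K, (dom ∩ toFun ⁻¹' {y}).ncard ≤ degBound
  Df_pos : ∀ x ∈ dom, 0 < Df x
  /-- `C¹` conformality: `Df` is the double limit of difference quotients along `dom` -/
  conformal : ∀ x ∈ dom,
    Filter.Tendsto (fun p : K × K => dist (toFun p.1) (toFun p.2) / dist p.1 p.2)
      (((𝓝 x ⊓ 𝓟 dom) ×ˢ (𝓝 x ⊓ 𝓟 dom)) ⊓ 𝓟 {p : K × K | p.1 ≠ p.2}) (𝓝 (Df x))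
  /-- (T0) local injectivity -/
  t0 : ∀ x ∈ dom, ∀ x' ∈ dom, x ≠ x' → toFun x = toFun x' →
    Disjoint (Metric.ball x (δf x)) (Metric.ball x' (δf x'))
  /-- (T1) openness -/
  t1 : ∀ x ∈ dom, Metric.ball (toFun x) Δ ⊆ toFun '' (Metric.ball x (δf x) ∩ dom)
  /-- (T2) dilation -/
  t2 : ∀ x ∈ dom, ∀ u ∈ dom, dist u x < δf x →
    β ≤ divq toFun Df u x ∧ divq toFun Df u x ≤ lam1
  /-- (T3) distortion -/
  t3 : ∀ x ∈ dom, ∀ r : ℝ, 0 < r → r ≤ Δ →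
    ∀ u₁ ∈ Metric.ball x (δf x) ∩ dom ∩ toFun ⁻¹' Metric.ball (toFun x) r,
    ∀ u₂ ∈ Metric.ball x (δf x) ∩ dom ∩ toFun ⁻¹' Metric.ball (toFun x) r,
    |Real.log (divq toFun Df u₁ x / Df u₂)| ≤ ε r

namespace ConfCover

variable {K : Type*} [MetricSpace K] {Δ β : ℝ} {ε : ℝ → ℝ}

/-- the fiber `f⁻¹{y}` (inside the domain of `f`). -/
def fiber (f : ConfCover K Δ β ε) (y : K) : Set K := f.dom ∩ f.toFun ⁻¹' {y}

end ConfCover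

/-- the iterated map `f_t^{(n)} = f_{t+n} ∘ ⋯ ∘ f_{t+1}` (0-indexed sequences). -/
def iterFrom {K : Type*} [MetricSpace K] {Δ β : ℝ} {ε : ℝ → ℝ}
    (F : ℕ → ConfCover K Δ β ε) (t : ℕ) : ℕ → K → K
  | 0 => id
  | n + 1 => (F (t + n)).toFun ∘ iterFrom F t n

/-- the domain `Ω_n` of the iterated map starting at time `t`. -/
def domFrom {K : Type*} [MetricSpace K] {Δ β : ℝ} {ε : ℝ → ℝ}
    (F : ℕ → ConfCover K Δ β ε) (t n : ℕ) : Set K :=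
  {x : K | ∀ k < n, iterFrom F t k x ∈ (F (t + k)).dom}

/-- the time-zero repeller `Λ(F) = ∩_n Ω_n(F)`. -/
def ΛSet {K : Type*} [MetricSpace K] {Δ β : ℝ} {ε : ℝ → ℝ}
    (F : ℕ → ConfCover K Δ β ε) : Set K :=
  {x : K | ∀ k : ℕ, iterFrom F 0 k x ∈ (F k).dom}

/-- the conformal derivative `Df^{(n)}` of the iterated map (from time zero). -/
def iterDeriv {K : Type*} [MetricSpace K] {Δ β : ℝ} {ε : ℝ → ℝ}
    (F : ℕ → ConfCover K Δ β ε) (n : ℕ) (x : K) : ℝ :=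
  ∏ k ∈ Finset.range n, (F k).Df (iterFrom F 0 k x)

/-- the set of `n`-th preimages `(f^{(n)})⁻¹{y}`. -/
def preimages {K : Type*} [MetricSpace K] {Δ β : ℝ} {ε : ℝ → ℝ}
    (F : ℕ → ConfCover K Δ β ε) (n : ℕ) (y : K) : Set K :=
  {x ∈ domFrom F 0 n | iterFrom F 0 n x = y}

/-- `M_n(s) = sup_y Σ_{f^{(n)} x = y} (Df^{(n)}_x)^{-s}`. -/
def Mseq {K : Type*} [MetricSpace K] {Δ β : ℝ} {ε : ℝ → ℝ}
    (F : ℕ → ConfCover K Δ β ε) (s : ℝ) (n : ℕ) : ℝ :=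
  ⨆ y : K, ∑' x : ↥(preimages F n y), iterDeriv F n (x : K) ^ (-s)

/-- `m_n(s) = inf_y Σ_{f^{(n)} x = y} (Df^{(n)}_x)^{-s}`. -/
def mseq {K : Type*} [MetricSpace K] {Δ β : ℝ} {ε : ℝ → ℝ}
    (F : ℕ → ConfCover K Δ β ε) (s : ℝ) (n : ℕ) : ℝ :=
  ⨅ y : K, ∑' x : ↥(preimages F n y), iterDeriv F n (x : K) ^ (-s)

/-- the lower pressure `P̲(s) = liminf (1/n) log m_n(s)`, with values in `[-∞,∞]`. -/
def lowPressure {K : Type*} [MetricSpace K] {Δ β : ℝ} {ε : ℝ → ℝ}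
    (F : ℕ → ConfCover K Δ β ε) (s : ℝ) : EReal :=
  Filter.liminf (fun n : ℕ => (((n : ℝ)⁻¹ * Real.log (mseq F s n) : ℝ) : EReal)) Filter.atTop

/-- the upper pressure `P̄(s) = limsup (1/n) log M_n(s)`, with values in `[-∞,∞]`. -/
def upPressure {K : Type*} [MetricSpace K] {Δ β : ℝ} {ε : ℝ → ℝ}
    (F : ℕ → ConfCover K Δ β ε) (s : ℝ) : EReal :=
  Filter.limsup (fun n : ℕ => (((n : ℝ)⁻¹ * Real.log (Mseq F s n) : ℝ) : EReal)) Filter.atTop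

/-- (T4): the sequence is `(n₀,Δ)`-mixing. -/
def Mixing {K : Type*} [MetricSpace K] {Δ β : ℝ} {ε : ℝ → ℝ}
    (F : ℕ → ConfCover K Δ β ε) (Δ' : ℝ) (n₀ : ℕ) : Prop :=
  ∀ t : ℕ, ∀ y : K, ∀ z ∈ domFrom F t n₀,
    ∃ x ∈ domFrom F t n₀, iterFrom F t n₀ x = y ∧ dist x z ≤ Δ'

/-- (T5): sub-exponential growth of the dilation constants. -/
def SubExp {K : Type*} [MetricSpace K] {Δ β : ℝ} {ε : ℝ → ℝ}
    (F : ℕ → ConfCover K Δ β ε) : Prop :=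
  Filter.Tendsto (fun k : ℕ => Real.log (F k).lam1 / (k : ℝ)) Filter.atTop (𝓝 0)

/-- `K` admits a finite cover by `Δ`-balls. -/
def FiniteCover (K : Type*) [MetricSpace K] (Δ : ℝ) : Prop :=
  ∃ t : Finset K, ∀ x : K, ∃ c ∈ t, dist x c < Δ

/-- `K` is `Δ`-homogeneous. -/
def Homogeneous (K : Type*) [MetricSpace K] (Δ : ℝ) : Prop :=
  ∃ δ : ℝ, 0 < δ ∧ δ < Δ ∧ ∀ y : K, ∃ z : K, dist z y < Δ ∧ δ ≤ dist z y


/-- the distance `d_ℰ` on `ℰ(Δ,β,ε)` (valued in `[0,∞]`). -/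
def dE {K : Type*} [MetricSpace K] {Δ β : ℝ} {ε : ℝ → ℝ}
    (f g : ConfCover K Δ β ε) : ℝ≥0∞ :=
  ⨆ y : K, ⨅ π : ↥(f.fiber y) ≃ ↥(g.fiber y), ⨆ x : ↥(f.fiber y),
    ENNReal.ofReal
      (ε (β / (β - 1) * dist (x : K) ((π x : K))) + |Real.log (g.Df (π x) / f.Df x)|)

/-- the lower critical exponent `s̲_crit = sup {s ≥ 0 : P̲(s) > 0}` (in `[0,∞]`). -/
def scritLow {K : Type*} [MetricSpace K] {Δ β : ℝ} {ε : ℝ → ℝ}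
    (F : ℕ → ConfCover K Δ β ε) : ℝ≥0∞ :=
  sSup {x : ℝ≥0∞ | ∃ s : ℝ, 0 ≤ s ∧ x = ENNReal.ofReal s ∧ 0 < lowPressure F s}

/-- the upper critical exponent `s̄_crit = inf {s ≥ 0 : P̄(s) < 0}` (in `[0,∞]`). -/
def scritUp {K : Type*} [MetricSpace K] {Δ β : ℝ} {ε : ℝ → ℝ}
    (F : ℕ → ConfCover K Δ β ε) : ℝ≥0∞ :=
  sInf {x : ℝ≥0∞ | ∃ s : ℝ, 0 ≤ s ∧ x = ENNReal.ofReal s ∧ upPressure F s < 0}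

def GoodD (ε : ℝ → ℝ) (Δ r d : ℝ) : Prop :=
  d = 0 ∨ ∃ t, 0 < t ∧ t ≤ Δ ∧ ε t ≤ r ∧ d < t

def CloseC {K : Type*} [MetricSpace K] {Δ β : ℝ} {ε : ℝ → ℝ}
    (f g : ConfCover K Δ β ε) (r : ℝ) : Prop :=
  ∀ y, ∃ π : ↥(f.fiber y) ≃ ↥(g.fiber y), ∀ x : ↥(f.fiber y),
    ε (β / (β - 1) * dist (x : K) ((π x : K))) + |Real.log (g.Df (π x) / f.Df x)| ≤ r

section aux
variable {K : Type*} [MetricSpace K] {Δ β : ℝ} {ε : ℝ → ℝ}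

lemma CloseC.symm' {f g : ConfCover K Δ β ε} {r : ℝ} (h : CloseC f g r) : CloseC g f r := by
  intro y
  obtain ⟨π, hπ⟩ := h y
  refine ⟨π.symm, fun x => ?_⟩
  have h1 := hπ (π.symm x)
  rw [Equiv.apply_symm_apply] at h1
  rw [dist_comm, ← abs_neg, ← Real.log_inv, inv_div]
  exact h1

lemma closeC_of_dE {f g : ConfCover K Δ β ε} {r : ℝ} (hr : 0 ≤ r)
    (h : dE f g ≤ ENNReal.ofReal r) : CloseC f g r := by
  intro y
  have h1 := (iSup_le_iff.1 h) y
  haveI : Finite ↥(f.fiber y) := f.fiber_finite y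
  haveI : Finite ↥(g.fiber y) := g.fiber_finite y
  rcases isEmpty_or_nonempty (↥(f.fiber y) ≃ ↥(g.fiber y)) with he | he
  · rw [iInf_of_empty] at h1
    exact absurd h1 (by simp)
  · obtain ⟨π, hπ⟩ := exists_eq_ciInf_of_finite
      (f := fun π : ↥(f.fiber y) ≃ ↥(g.fiber y) => ⨆ x : ↥(f.fiber y),
        ENNReal.ofReal
        (ε (β / (β - 1) * dist (x : K) ((π x : K))) + |Real.log (g.Df (π x) / f.Df x)|))
    rw [← hπ] at h1
    exact ⟨π, fun x => (ENNReal.ofReal_le_ofReal_iff hr).1 ((iSup_le_iff.1 h1) x)⟩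

lemma Df_bounds (f : ConfCover K Δ β ε) {x : K} (hx : x ∈ f.dom) :
    β ≤ f.Df x ∧ f.Df x ≤ f.lam1 := by
  have h := f.t2 x hx x hx (by
    rw [dist_self]; exact f.δ0_pos.trans_le (f.δf_mem x hx).1)
  simpa [divq] using h

lemma step_lemma (hΔ : 0 < Δ) (hβ : 1 < β)
    (hεmono : StrictMonoOn ε (Set.Ici 0))
    (hεnn : ∀ r : ℝ, 0 ≤ r → 0 ≤ ε r)
    {r : ℝ} (hr0 : 0 ≤ r) (hrε : r ≤ ε Δ) (f g : ConfCover K Δ β ε)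
    (hc : CloseC f g r) (y y' : K) (hg : GoodD ε Δ r (dist y y')) :
    ∃ ψ : K → K, MapsTo ψ (f.fiber y) (g.fiber y') ∧ InjOn ψ (f.fiber y) ∧
      ∀ x ∈ f.fiber y, GoodD ε Δ r (dist x (ψ x)) ∧
        |Real.log (g.Df (ψ x) / f.Df x)| ≤ 2 * r := by
  obtain ⟨π, hπ⟩ := hc y'
  have hd : dist y y' < Δ := by
    rcases hg with h | ⟨t, h1, h2, h3, h4⟩ <;> linarith
  have hlift : ∀ x, ∃ z, x ∈ f.fiber y → z ∈ f.fiber y' ∧ dist z x < f.δf x := by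
    intro x
    by_cases hx : x ∈ f.fiber y
    · have hxy : f.toFun x = y := hx.2
      have := f.t1 x hx.1 (show y' ∈ _ by rw [hxy, Metric.mem_ball, dist_comm]; exact hd)
      obtain ⟨z, ⟨hz1, hz2⟩, hz3⟩ := this
      exact ⟨z, fun _ => ⟨⟨hz2, hz3⟩, hz1⟩⟩
    · exact ⟨x, fun h => absurd h hx⟩
  choose L hL using hlift
  have hLd : ∀ x ∈ f.fiber y, β * dist (L x) x ≤ dist y y' := by
    intro x hx
    obtain ⟨h1, h2⟩ := hL x hx
    by_cases he : L x = x
    · rw [he]; simp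
    · have h3 := (f.t2 x hx.1 (L x) h1.1 h2).1
      rw [divq, if_neg he, le_div_iff₀ (dist_pos.2 he)] at h3
      rwa [show f.toFun (L x) = y' from h1.2, show f.toFun x = y from hx.2, dist_comm y' y] at h3
  refine ⟨fun x => if h : L x ∈ f.fiber y' then (π ⟨L x, h⟩ : K) else x, ?_, ?_, ?_⟩
  · intro x hx
    simp only [dif_pos (hL x hx).1]
    exact (π _).2
  · intro x hx x' hx' he
    simp only [dif_pos (hL x hx).1, dif_pos (hL x' hx').1] at he
    have h1 := congrArg Subtype.val (π.injective (Subtype.ext he))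
    simp only at h1
    by_contra hne
    have h2 := f.t0 x hx.1 x' hx'.1 hne
      ((show f.toFun x = y from hx.2).trans (show f.toFun x' = y from hx'.2).symm)
    have h5 : L x ∈ Metric.ball x' (f.δf x') := by
      rw [h1]; exact (hL x' hx').2
    exact Set.disjoint_left.1 h2 (show L x ∈ Metric.ball x (f.δf x) from (hL x hx).2) h5
  · intro x hx
    obtain ⟨h1, h2⟩ := hL x hx
    simp only [dif_pos h1]
    have h3 := hπ ⟨L x, h1⟩
    have h4 := hLd x hx
    simp only at h3
    set w : K := (π ⟨L x, h1⟩ : K) with hw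
    have hwd : w ∈ g.dom := (π ⟨L x, h1⟩).2.1
    set q := β / (β - 1) * dist (L x) w with hq
    have hb : 0 < β - 1 := by linarith
    have hb' : 0 < β := by linarith
    have hq0 : 0 ≤ q := by positivity
    have hpq : β * dist (L x) w = q * (β - 1) := by
      rw [hq]; field_simp
    have hεq : ε q ≤ r := by linarith [abs_nonneg (Real.log (g.Df w / f.Df (L x)))]
    have hlog : |Real.log (g.Df w / f.Df (L x))| ≤ r := by linarith [hεnn q hq0]
    have hqΔ : q ≤ Δ := (hεmono.le_iff_le hq0 hΔ.le).1 (hεq.trans hrε)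
    have htri : β * dist x w ≤ dist y y' + q * (β - 1) := by
      have := dist_triangle x (L x) w
      rw [dist_comm x (L x)] at this
      nlinarith
    constructor
    · rcases hg with h | ⟨t, t1, t2, t3, t4⟩
      · rcases hq0.eq_or_lt with h0 | h0
        · left
          rw [h, ← h0] at htri
          have := dist_nonneg (x := x) (y := w)
          nlinarith
        · right
          refine ⟨q, h0, hqΔ, hεq, ?_⟩
          rw [h] at htri
          nlinarith
      · right
        rcases le_total q t with hqt | hqt
        · refine ⟨t, t1, t2, t3, ?_⟩
          nlinarith
        · refine ⟨q, t1.trans_le hqt, hqΔ, hεq, ?_⟩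
          nlinarith
    · have hp1 := f.Df_pos x hx.1
      have hp2 := f.Df_pos (L x) h1.1
      have hp3 := g.Df_pos w hwd
      have hsec : |Real.log (f.Df x / f.Df (L x))| ≤ r := by
        rcases hg with h | ⟨t, t1, t2, t3, t4⟩
        · have : L x = x := by
            rw [h] at h4
            have := dist_nonneg (x := L x) (y := x)
            exact dist_eq_zero.1 (by nlinarith)
          rw [this, div_self hp1.ne']; simpa using hr0
        · have h5 := f.t3 x hx.1 t t1 t2 x
            ⟨⟨Metric.mem_ball_self (f.δ0_pos.trans_le (f.δf_mem x hx.1).1), hx.1⟩,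
              Metric.mem_ball_self t1⟩ (L x)
            ⟨⟨h2, h1.1⟩, by
              rw [Set.mem_preimage, show f.toFun (L x) = y' from h1.2,
                show f.toFun x = y from hx.2, Metric.mem_ball, dist_comm]
              exact t4⟩
          simp only [divq, if_true] at h5
          exact h5.trans t3
      rw [Real.log_div hp3.ne' hp2.ne'] at hlog
      rw [Real.log_div hp1.ne' hp2.ne'] at hsec
      rw [Real.log_div hp3.ne' hp1.ne']
      rw [abs_le] at *
      constructor <;> linarith [hlog.1, hlog.2, hsec.1, hsec.2]

lemma pre_zero (F : ℕ → ConfCover K Δ β ε) (y : K) : preimages F 0 y = {y} := by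
  ext x
  simp [preimages, domFrom, iterFrom]

lemma mem_pre_succ (F : ℕ → ConfCover K Δ β ε) (n : ℕ) (x y : K) :
    x ∈ preimages F (n+1) y ↔
      iterFrom F 0 n x ∈ (F n).fiber y ∧ x ∈ preimages F n (iterFrom F 0 n x) := by
  simp only [preimages, domFrom, ConfCover.fiber, iterFrom, Nat.lt_succ_iff_lt_or_eq,
    Set.mem_setOf_eq, Set.mem_inter_iff, Set.mem_preimage, Set.mem_singleton_iff,
    Function.comp, zero_add]
  constructor
  · rintro ⟨h1, h2⟩
    exact ⟨⟨h1 n (Or.inr rfl), h2⟩, fun k hk => h1 k (Or.inl hk), trivial⟩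
  · rintro ⟨⟨h1, h2⟩, h3, _⟩
    refine ⟨fun k hk => ?_, h2⟩
    rcases hk with hk | rfl
    · exact h3 k hk
    · exact h1

lemma pre_iter {F : ℕ → ConfCover K Δ β ε} {n : ℕ} {x y : K} (h : x ∈ preimages F n y) :
    iterFrom F 0 n x = y := h.2

lemma pre_dom {F : ℕ → ConfCover K Δ β ε} {n : ℕ} {x y : K} (h : x ∈ preimages F n y)
    {k : ℕ} (hk : k < n) : iterFrom F 0 k x ∈ (F k).dom := by
  have := h.1 k hk
  simpa using this

lemma iterDeriv_bounds (hβ : 1 < β) {F : ℕ → ConfCover K Δ β ε} {n : ℕ} {x y : K}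
    (h : x ∈ preimages F n y) :
    β ^ n ≤ iterDeriv F n x ∧ iterDeriv F n x ≤ ∏ k ∈ Finset.range n, (F k).lam1 := by
  constructor
  · have := Finset.prod_le_prod (s := Finset.range n) (f := fun _ => β)
      (g := fun k => (F k).Df (iterFrom F 0 k x)) (fun _ _ => by linarith)
      (fun k hk => (Df_bounds (F k) (pre_dom h (Finset.mem_range.1 hk))).1)
    simpa [iterDeriv] using this
  · exact Finset.prod_le_prod
      (fun k hk => ((F k).Df_pos _ (pre_dom h (Finset.mem_range.1 hk))).le)
      (fun k hk => (Df_bounds (F k) (pre_dom h (Finset.mem_range.1 hk))).2)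

lemma iterDeriv_pos (hβ : 1 < β) {F : ℕ → ConfCover K Δ β ε} {n : ℕ} {x y : K}
    (h : x ∈ preimages F n y) : 0 < iterDeriv F n x :=
  lt_of_lt_of_le (by positivity) (iterDeriv_bounds hβ h).1

lemma pre_nonempty (F : ℕ → ConfCover K Δ β ε) (n : ℕ) (y : K) : (preimages F n y).Nonempty := by
  induction n generalizing y with
  | zero => rw [pre_zero]; exact ⟨y, rfl⟩
  | succ n ih =>
    obtain ⟨z, hz, hzy⟩ := (F n).surj y
    obtain ⟨x, hx⟩ := ih z
    refine ⟨x, (mem_pre_succ F n x y).2 ?_⟩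
    rw [pre_iter hx]
    exact ⟨⟨hz, hzy⟩, hx⟩

lemma pre_eq_biUnion (F : ℕ → ConfCover K Δ β ε) (n : ℕ) (y : K) :
    preimages F (n+1) y = ⋃ z ∈ (F n).fiber y, preimages F n z := by
  ext x
  rw [mem_pre_succ]
  simp only [Set.mem_iUnion, exists_prop]
  constructor
  · rintro ⟨h1, h2⟩; exact ⟨_, h1, h2⟩
  · rintro ⟨z, h1, h2⟩
    rw [pre_iter h2]; exact ⟨h1, h2⟩

lemma pre_card (F : ℕ → ConfCover K Δ β ε) (n : ℕ) :
    ∃ N : ℕ, ∀ y, (preimages F n y).Finite ∧ (preimages F n y).ncard ≤ N := by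
  induction n with
  | zero => exact ⟨1, fun y => by rw [pre_zero]; simp⟩
  | succ n ih =>
    obtain ⟨N, hN⟩ := ih
    refine ⟨(F n).degBound * N, fun y => ?_⟩
    have hf : ((F n).fiber y).Finite := (F n).fiber_finite y
    have hc : ((F n).fiber y).ncard ≤ (F n).degBound := (F n).fiber_card y
    rw [pre_eq_biUnion]
    refine ⟨hf.biUnion fun z _ => (hN z).1, ?_⟩
    have h1 : (⋃ z ∈ (F n).fiber y, preimages F n z)
        = ((hf.toFinset.biUnion fun z => (hN z).1.toFinset : Finset K) : Set K) := by
      ext x; simp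
    rw [h1, Set.ncard_coe_finset]
    refine (Finset.card_biUnion_le_card_mul _ _ N fun z _ => ?_).trans ?_
    · rw [← Set.ncard_eq_toFinset_card _ (hN z).1]; exact (hN z).2
    · rw [← Set.ncard_eq_toFinset_card _ hf]
      exact Nat.mul_le_mul_right _ hc

lemma inj_lemma (hΔ : 0 < Δ) (hβ : 1 < β)
    (hεmono : StrictMonoOn ε (Set.Ici 0))
    (hεnn : ∀ r : ℝ, 0 ≤ r → 0 ≤ ε r)
    {r : ℝ} (hr0 : 0 ≤ r) (hrε : r ≤ ε Δ) (F G : ℕ → ConfCover K Δ β ε)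
    (hc : ∀ n, CloseC (F n) (G n) r) (n : ℕ) (y y' : K) (hg : GoodD ε Δ r (dist y y')) :
    ∃ φ : K → K, MapsTo φ (preimages F n y) (preimages G n y') ∧ InjOn φ (preimages F n y) ∧
      ∀ x ∈ preimages F n y,
        Real.log (iterDeriv G n (φ x)) ≤ Real.log (iterDeriv F n x) + n * (2 * r) := by
  induction n generalizing y y' with
  | zero =>
    refine ⟨fun _ => y', ?_, ?_, ?_⟩
    · intro x _; rw [pre_zero]; rfl
    · rw [pre_zero]; simp
    · intro x _; simp [iterDeriv]
  | succ n ih =>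
    obtain ⟨ψ, h1, h2, h3⟩ := step_lemma hΔ hβ hεmono hεnn hr0 hrε (F n) (G n) (hc n) y y' hg
    have : ∀ z, ∃ φ : K → K, z ∈ (F n).fiber y →
      MapsTo φ (preimages F n z) (preimages G n (ψ z)) ∧ InjOn φ (preimages F n z) ∧
      ∀ x ∈ preimages F n z,
        Real.log (iterDeriv G n (φ x)) ≤ Real.log (iterDeriv F n x) + n * (2 * r) := by
      intro z
      by_cases hz : z ∈ (F n).fiber y
      · obtain ⟨φ, hφ⟩ := ih z (ψ z) (h3 z hz).1
        exact ⟨φ, fun _ => hφ⟩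
      · exact ⟨id, fun h => absurd h hz⟩
    choose Φ hΦ using this
    have key : ∀ x ∈ preimages F (n+1) y,
        Φ (iterFrom F 0 n x) x ∈ preimages G n (ψ (iterFrom F 0 n x)) := by
      intro x hx
      obtain ⟨a, b⟩ := (mem_pre_succ F n x y).1 hx
      exact (hΦ _ a).1 b
    have key2 : ∀ x ∈ preimages F (n+1) y,
        Φ (iterFrom F 0 n x) x ∈ preimages G (n+1) y' := by
      intro x hx
      rw [mem_pre_succ, pre_iter (key x hx)]
      exact ⟨h1 ((mem_pre_succ F n x y).1 hx).1, key x hx⟩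
    refine ⟨fun x => Φ (iterFrom F 0 n x) x, key2, ?_, ?_⟩
    · intro x hx x' hx' he
      simp only at he
      obtain ⟨a, b⟩ := (mem_pre_succ F n x y).1 hx
      obtain ⟨a', b'⟩ := (mem_pre_succ F n x' y).1 hx'
      have e1 := pre_iter (key x hx)
      have e2 := pre_iter (key x' hx')
      rw [he, e2] at e1
      have e3 := h2 a' a e1
      rw [e3] at he b'
      exact (hΦ _ a).2.1 b b' he
    · intro x hx
      obtain ⟨a, b⟩ := (mem_pre_succ F n x y).1 hx
      have e1 := (hΦ _ a).2.2 x b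
      have e2 := (abs_le.1 (h3 _ a).2).2
      have p1 := (F n).Df_pos _ a.1
      have p2 := (G n).Df_pos _ (h1 a).1
      rw [Real.log_div p2.ne' p1.ne'] at e2
      have k1 : iterDeriv F (n+1) x = iterDeriv F n x * (F n).Df (iterFrom F 0 n x) :=
        Finset.prod_range_succ _ _
      have k2 : ∀ w, iterDeriv G (n+1) w = iterDeriv G n w * (G n).Df (iterFrom G 0 n w) :=
        fun w => Finset.prod_range_succ _ _
      simp only
      rw [k1, k2, pre_iter (key x hx), Real.log_mul (iterDeriv_pos hβ b).ne' p1.ne',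
        Real.log_mul (iterDeriv_pos hβ (key x hx)).ne' p2.ne']
      push_cast
      linarith

lemma pre_finite (F : ℕ → ConfCover K Δ β ε) (n : ℕ) (y : K) : (preimages F n y).Finite := by
  obtain ⟨N, hN⟩ := pre_card F n
  exact (hN y).1

def Ssum (F : ℕ → ConfCover K Δ β ε) (s : ℝ) (n : ℕ) (y : K) : ℝ :=
  ∑' x : ↥(preimages F n y), iterDeriv F n (x : K) ^ (-s)

lemma Ssum_compare (hΔ : 0 < Δ) (hβ : 1 < β)
    (hεmono : StrictMonoOn ε (Set.Ici 0))
    (hεnn : ∀ r : ℝ, 0 ≤ r → 0 ≤ ε r)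
    {r : ℝ} (hr0 : 0 ≤ r) (hrε : r ≤ ε Δ) (F G : ℕ → ConfCover K Δ β ε)
    (hc : ∀ n, CloseC (F n) (G n) r) (n : ℕ) (y : K) {s u : ℝ} (hu : 0 ≤ u) (hus : u ≤ s) :
    Ssum F s n y ≤ Real.exp (n * (2 * r * u - (s - u) * Real.log β)) * Ssum G u n y := by
  obtain ⟨φ, h1, h2, h3⟩ := inj_lemma hΔ hβ hεmono hεnn hr0 hrε F G hc n y y
    (Or.inl (dist_self y))
  haveI : Finite ↥(preimages F n y) := pre_finite F n y
  haveI : Finite ↥(preimages G n y) := pre_finite G n y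
  unfold Ssum
  rw [← tsum_mul_left]
  refine Summable.tsum_le_tsum_of_inj (h1.restrict φ _ _) (h1.restrict_inj.2 h2) ?_ ?_
    (Summable.of_finite) (Summable.of_finite)
  · intro c _
    have := iterDeriv_pos hβ c.2
    positivity
  · rintro ⟨x, hx⟩
    simp only [MapsTo.val_restrict_apply]
    have p1 := iterDeriv_pos hβ hx
    have p2 := iterDeriv_pos hβ (h1 hx)
    rw [Real.rpow_def_of_pos p1, Real.rpow_def_of_pos p2, ← Real.exp_add, Real.exp_le_exp]
    have e1 := h3 x hx
    have e2 : n * Real.log β ≤ Real.log (iterDeriv F n x) := by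
      rw [← Real.log_pow]
      exact Real.log_le_log (by positivity) (iterDeriv_bounds hβ hx).1
    have e3 := mul_le_mul_of_nonneg_left e1 hu
    have e4 := mul_le_mul_of_nonneg_left e2 (sub_nonneg.2 hus)
    linarith

lemma Ssum_bounds [Nonempty K] (hβ : 1 < β) (F : ℕ → ConfCover K Δ β ε) {s : ℝ} (hs : 0 ≤ s) (n : ℕ) :
    ∃ a b : ℝ, 0 < a ∧ ∀ y, a ≤ Ssum F s n y ∧ Ssum F s n y ≤ b := by
  obtain ⟨N, hN⟩ := pre_card F n
  have hpos : 0 < ∏ k ∈ Finset.range n, (F k).lam1 := by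
    obtain ⟨y⟩ := ‹Nonempty K›
    obtain ⟨x, hx⟩ := pre_nonempty F n y
    exact (iterDeriv_pos hβ hx).trans_le (iterDeriv_bounds hβ hx).2
  refine ⟨(∏ k ∈ Finset.range n, (F k).lam1) ^ (-s), N, by positivity, fun y => ?_⟩
  haveI : Fintype ↥(preimages F n y) := (hN y).1.fintype
  constructor
  · obtain ⟨x, hx⟩ := pre_nonempty F n y
    refine le_trans ?_ (Summable.le_tsum (Summable.of_finite) (⟨x, hx⟩ : ↥(preimages F n y)) ?_)
    · exact Real.rpow_le_rpow_of_nonpos (iterDeriv_pos hβ hx) (iterDeriv_bounds hβ hx).2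
        (by linarith)
    · intro c _
      have := iterDeriv_pos hβ c.2
      positivity
  · unfold Ssum
    rw [tsum_fintype]
    have : ∀ x ∈ (Finset.univ : Finset ↥(preimages F n y)),
        iterDeriv F n (x : K) ^ (-s) ≤ 1 := by
      intro x _
      exact Real.rpow_le_one_of_one_le_of_nonpos
        ((one_le_pow₀ hβ.le).trans (iterDeriv_bounds hβ x.2).1) (by linarith)
    refine (Finset.sum_le_card_nsmul _ _ 1 this).trans ?_
    have h2 := (hN y).2
    rw [← Nat.card_coe_set_eq, Nat.card_eq_fintype_card] at h2
    simpa using h2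

lemma log_aux {a b c : ℝ} (n : ℕ) (ha : 0 < a) (hb : 0 < b)
    (h : a ≤ Real.exp (n * c) * b) (hn : 0 < n) :
    (n : ℝ)⁻¹ * Real.log a ≤ (n : ℝ)⁻¹ * Real.log b + c := by
  have h1 := Real.log_le_log ha h
  rw [Real.log_mul (Real.exp_pos _).ne' hb.ne', Real.log_exp] at h1
  have hn' : (0 : ℝ) < n := by exact_mod_cast hn
  have h2 := mul_le_mul_of_nonneg_left h1 (inv_nonneg.2 hn'.le)
  have h3 : (n : ℝ)⁻¹ * (n * c + Real.log b) = (n : ℝ)⁻¹ * Real.log b + c := by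
    field_simp
    ring
  linarith

lemma liminf_aux (a b : ℕ → ℝ) (c : ℝ) (h : ∀ n, 0 < n → a n ≤ b n + c) :
    Filter.liminf (fun n => (a n : EReal)) atTop ≤
      Filter.liminf (fun n => (b n : EReal)) atTop + (c : EReal) := by
  have h1 : Filter.liminf (fun n => (a n : EReal)) atTop ≤
      Filter.liminf ((fun _ : ℕ => (c : EReal)) + fun n => (b n : EReal)) atTop := by
    refine Filter.liminf_le_liminf ?_
    filter_upwards [eventually_gt_atTop 0] with n hn
    have := h n hn
    rw [add_comm] at this
    simp only [Pi.add_apply]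
    exact_mod_cast this
  refine h1.trans ((EReal.liminf_add_le ?_ ?_).trans ?_)
  · left; simp
  · left; simp
  · rw [Filter.limsup_const, add_comm]

lemma limsup_aux (a b : ℕ → ℝ) (c : ℝ) (h : ∀ n, 0 < n → a n ≤ b n + c) :
    Filter.limsup (fun n => (a n : EReal)) atTop ≤
      Filter.limsup (fun n => (b n : EReal)) atTop + (c : EReal) := by
  have h1 : Filter.limsup (fun n => (a n : EReal)) atTop ≤
      Filter.limsup ((fun _ : ℕ => (c : EReal)) + fun n => (b n : EReal)) atTop := by
    refine Filter.limsup_le_limsup ?_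
    filter_upwards [eventually_gt_atTop 0] with n hn
    have := h n hn
    rw [add_comm] at this
    simp only [Pi.add_apply]
    exact_mod_cast this
  refine h1.trans ((EReal.limsup_add_le ?_ ?_).trans ?_)
  · left; simp
  · left; simp
  · rw [Filter.limsup_const, add_comm]

lemma pressure_compare [Nonempty K] (hΔ : 0 < Δ) (hβ : 1 < β)
    (hεmono : StrictMonoOn ε (Set.Ici 0))
    (hεnn : ∀ r : ℝ, 0 ≤ r → 0 ≤ ε r)
    {r : ℝ} (hr0 : 0 ≤ r) (hrε : r ≤ ε Δ) (F G : ℕ → ConfCover K Δ β ε)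
    (hc : ∀ n, CloseC (F n) (G n) r) {s u : ℝ} (hu : 0 ≤ u) (hus : u ≤ s) :
    lowPressure F s ≤ lowPressure G u + ((2 * r * u - (s - u) * Real.log β : ℝ) : EReal) ∧
    upPressure F s ≤ upPressure G u + ((2 * r * u - (s - u) * Real.log β : ℝ) : EReal) := by
  constructor
  · refine liminf_aux _ _ _ fun n hn => ?_
    obtain ⟨a, b, ha, hab⟩ := Ssum_bounds hβ F (hu.trans hus) n
    obtain ⟨a', b', ha', hab'⟩ := Ssum_bounds hβ G hu n
    have m1 : a ≤ mseq F s n := le_ciInf fun y => (hab y).1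
    have m2 : a' ≤ mseq G u n := le_ciInf fun y => (hab' y).1
    refine log_aux n (ha.trans_le m1) (ha'.trans_le m2) ?_ hn
    rw [← div_le_iff₀' (Real.exp_pos _)]
    refine le_ciInf fun y => ?_
    rw [div_le_iff₀' (Real.exp_pos _)]
    refine le_trans (ciInf_le ⟨a, ?_⟩ y)
      (Ssum_compare hΔ hβ hεmono hεnn hr0 hrε F G hc n y hu hus)
    rintro _ ⟨y, rfl⟩
    exact (hab y).1
  · refine limsup_aux _ _ _ fun n hn => ?_
    obtain ⟨a, b, ha, hab⟩ := Ssum_bounds hβ F (hu.trans hus) n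
    obtain ⟨a', b', ha', hab'⟩ := Ssum_bounds hβ G hu n
    have bd : BddAbove (Set.range (Ssum F s n)) := ⟨b, by rintro _ ⟨y, rfl⟩; exact (hab y).2⟩
    have bd' : BddAbove (Set.range (Ssum G u n)) := ⟨b', by rintro _ ⟨y, rfl⟩; exact (hab' y).2⟩
    obtain ⟨y0⟩ := id ‹Nonempty K›
    have m1 : a ≤ Mseq F s n := (hab y0).1.trans (le_ciSup bd y0)
    have m2 : a' ≤ Mseq G u n := (hab' y0).1.trans (le_ciSup bd' y0)
    refine log_aux n (ha.trans_le m1) (ha'.trans_le m2) ?_ hn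
    refine ciSup_le fun y => ?_
    refine (Ssum_compare hΔ hβ hεmono hεnn hr0 hrε F G hc n y hu hus).trans ?_
    exact mul_le_mul_of_nonneg_left (le_ciSup bd' y) (Real.exp_pos _).le

lemma scrit_compare [Nonempty K] (hΔ : 0 < Δ) (hβ : 1 < β)
    (hεmono : StrictMonoOn ε (Set.Ici 0))
    (hεnn : ∀ r : ℝ, 0 ≤ r → 0 ≤ ε r)
    {r : ℝ} (hr0 : 0 ≤ r) (hrε : r ≤ ε Δ) (F G : ℕ → ConfCover K Δ β ε)
    (hc : ∀ n, CloseC (F n) (G n) r) :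
    scritLow F ≤ ENNReal.ofReal (1 + 2 * r / Real.log β) * scritLow G ∧
    scritUp F ≤ ENNReal.ofReal (1 + 2 * r / Real.log β) * scritUp G := by
  have hlog : 0 < Real.log β := Real.log_pos hβ
  have h0 : 0 ≤ 2 * r / Real.log β := by positivity
  set c := 1 + 2 * r / Real.log β with hcdef
  have hc1 : 1 ≤ c := by linarith
  have hc0 : 0 < c := by linarith
  have hz : ∀ u : ℝ, 2 * r * u - (c * u - u) * Real.log β = 0 := by
    intro u; rw [hcdef]; field_simp; ring
  have key : ∀ u : ℝ, 0 ≤ u →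
      lowPressure F (c * u) ≤ lowPressure G u ∧ upPressure F (c * u) ≤ upPressure G u := by
    intro u hu
    have := pressure_compare hΔ hβ hεmono hεnn hr0 hrε F G hc (s := c * u) hu (by nlinarith)
    rw [hz u] at this
    simpa using this
  constructor
  · refine sSup_le ?_
    rintro _ ⟨s, hs, rfl, hP⟩
    have hs' : 0 ≤ s / c := by positivity
    have hm : c * (s / c) = s := by field_simp
    rw [← hm, ENNReal.ofReal_mul hc0.le]
    gcongr
    refine le_sSup ⟨s / c, hs', rfl, ?_⟩
    have := (key _ hs').1
    rw [hm] at this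
    exact hP.trans_le this
  · have hne : ENNReal.ofReal c ≠ 0 := by simpa using hc0
    rw [mul_comm, ← ENNReal.div_le_iff hne ENNReal.ofReal_ne_top]
    refine le_sInf ?_
    rintro _ ⟨s, hs, rfl, hP⟩
    rw [ENNReal.div_le_iff hne ENNReal.ofReal_ne_top, mul_comm, ← ENNReal.ofReal_mul hc0.le]
    exact sInf_le ⟨c * s, by positivity, rfl, (key s hs).2.trans_lt hP⟩

end aux

/-- **Parameter dependence of the pressure.** If `d_∞(F,F̃) ≤ r ≤ ε(Δ)` then
`|P̲(s,F) − P̲(s,F̃)| ≤ 2rs` for `s ≥ 0`, and the critical exponents satisfy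
`(1 + 2r/log β)⁻¹ ≤ s̲_crit(F)/s̲_crit(F̃) ≤ 1 + 2r/log β` (stated multiplicatively);
the same bounds hold for `P̄` and `s̄_crit`. -/
theorem pressure_parameter_dependence {K : Type*} [MetricSpace K] [CompleteSpace K] [Nonempty K]
    {Δ β : ℝ} {ε : ℝ → ℝ}
    (hpt : ∀ x : K, (𝓝[≠] x).NeBot)
    (hΔ : 0 < Δ) (hβ : 1 < β)
    (hcov : FiniteCover K Δ) (hhom : Homogeneous K Δ)
    (hε0 : ε 0 = 0)
    (hεmono : StrictMonoOn ε (Set.Ici 0))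
    (hεconc : ConcaveOn ℝ (Set.Ici 0) ε)
    (hεnn : ∀ r : ℝ, 0 ≤ r → 0 ≤ ε r)
    (F G : ℕ → ConfCover K Δ β ε)
    (r : ℝ) (hr0 : 0 ≤ r) (hrε : r ≤ ε Δ)
    (hd : ∀ n : ℕ, dE (F n) (G n) ≤ ENNReal.ofReal r) :
    (∀ s : ℝ, 0 ≤ s →
      (lowPressure F s ≤ lowPressure G s + ((2 * r * s : ℝ) : EReal) ∧
        lowPressure G s ≤ lowPressure F s + ((2 * r * s : ℝ) : EReal)) ∧
      (upPressure F s ≤ upPressure G s + ((2 * r * s : ℝ) : EReal) ∧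
        upPressure G s ≤ upPressure F s + ((2 * r * s : ℝ) : EReal))) ∧
    (scritLow F ≤ ENNReal.ofReal (1 + 2 * r / Real.log β) * scritLow G ∧
      scritLow G ≤ ENNReal.ofReal (1 + 2 * r / Real.log β) * scritLow F) ∧
    (scritUp F ≤ ENNReal.ofReal (1 + 2 * r / Real.log β) * scritUp G ∧
      scritUp G ≤ ENNReal.ofReal (1 + 2 * r / Real.log β) * scritUp F) := by
  have hFG : ∀ n, CloseC (F n) (G n) r := fun n => closeC_of_dE hr0 (hd n)
  have hGF : ∀ n, CloseC (G n) (F n) r := fun n => (hFG n).symm'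
  have c1 := scrit_compare hΔ hβ hεmono hεnn hr0 hrε F G hFG
  have c2 := scrit_compare hΔ hβ hεmono hεnn hr0 hrε G F hGF
  refine ⟨fun s hs => ?_, ⟨c1.1, c2.1⟩, ⟨c1.2, c2.2⟩⟩
  have p1 := pressure_compare hΔ hβ hεmono hεnn hr0 hrε F G hFG hs le_rfl
  have p2 := pressure_compare hΔ hβ hεmono hεnn hr0 hrε G F hGF hs le_rfl
  rw [sub_self, zero_mul, sub_zero] at p1 p2
  exact ⟨⟨p1.1, p2.1⟩, ⟨p1.2, p2.2⟩⟩

end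
end
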